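/- In the unbiased Waiter-Client game on the edge set of K_n whose winning sets are the pancyclic spanning subgraphs of K_n, τ_WC(PC_n, 1) = n + (1 + o(1))·log₂ n; that is, for every ε > 0 there exists n₀ such that for all n ≥ n₀, n + (1 − ε)·log₂ n ≤ τ_WC(PC_n, 1) ≤ n + (1 + ε)·log₂ n. -/

import Mathlib

open Finset

/-- `WaiterWins board b win t Cl W` means: starting from the position where Client owns the
elements of `Cl` and Waiter owns the elements of `W`, Waiter can force that within the next `t`
rounds of the `b`-biased Waiter-Client game on the board `board` a position is reached in which
the predicate `win` holds of (Client's elements, Waiter's elements).  In each round Waiter offers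
`b+1` previously unclaimed board elements (or all remaining unclaimed elements, if fewer than
`b+1` remain); Client claims exactly one of them, the rest go to Waiter. -/
def WaiterWins {X : Type*} [DecidableEq X] (board : Finset X) (b : ℕ)
    (win : Finset X → Finset X → Prop) :
    ℕ → Finset X → Finset X → Prop
  | 0, Cl, W => win Cl W
  | (t+1), Cl, W => win Cl W ∨
      ∃ O : Finset X, O.Nonempty ∧ O ⊆ board \ (Cl ∪ W) ∧
        O.card = min (b + 1) ((board \ (Cl ∪ W)).card) ∧
        ∀ x ∈ O, WaiterWins board b win t (insert x Cl) (W ∪ O.erase x)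

/-- `tauWC board F b` : the smallest number of rounds within which Waiter can force Client's
elements to contain some member of the winning family `F`, in the `b`-biased Waiter-Client game
on the board `board`. -/
noncomputable def tauWC {X : Type*} [DecidableEq X] (board : Finset X)
    (F : Set (Finset X)) (b : ℕ) : ℕ :=
  sInf {t | WaiterWins board b (fun Cl _ => ∃ A ∈ F, A ⊆ Cl) t ∅ ∅}

/-- The edge set of the complete graph on `Fin n`. -/
def Kedges (n : ℕ) : Finset (Sym2 (Fin n)) :=
  Finset.univ.filter (fun e => ¬ e.IsDiag)

/-- The family of edge sets of pancyclic (spanning) subgraphs of `K_n`: edge sets containing,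
for every `3 ≤ ℓ ≤ n`, the edges of some cycle of length `ℓ`. -/
def PCfamily (n : ℕ) : Set (Finset (Sym2 (Fin n))) :=
  {F | F ⊆ Kedges n ∧ ∀ ℓ : ℕ, 3 ≤ ℓ → ℓ ≤ n →
    ∃ (u : Fin n) (p : (⊤ : SimpleGraph (Fin n)).Walk u u),
      p.IsCycle ∧ p.length = ℓ ∧ ∀ e ∈ p.edges, e ∈ F}


/-! ## Framework -/

lemma ww_mono {X : Type*} [DecidableEq X] {board : Finset X} {b : ℕ}
    {Q Q' : Finset X → Finset X → Prop} (h : ∀ C W, Q C W → Q' C W) :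
    ∀ (t : ℕ) (C W : Finset X), WaiterWins board b Q t C W → WaiterWins board b Q' t C W := by
  intro t
  induction t with
  | zero => intro C W hw; exact h _ _ hw
  | succ t ih =>
    intro C W hw
    rcases hw with hw | ⟨O, h1, h2, h3, h4⟩
    · exact Or.inl (h _ _ hw)
    · exact Or.inr ⟨O, h1, h2, h3, fun x hx => ih _ _ (h4 x hx)⟩

lemma ww_of_win {X : Type*} [DecidableEq X] {board : Finset X} {b : ℕ}
    {Q : Finset X → Finset X → Prop} (t : ℕ) (C W : Finset X) (h : Q C W) :
    WaiterWins board b Q t C W := by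
  cases t with
  | zero => exact h
  | succ t => exact Or.inl h

lemma ww_le_succ {X : Type*} [DecidableEq X] {board : Finset X} {b : ℕ}
    {Q : Finset X → Finset X → Prop} :
    ∀ (t : ℕ) (C W : Finset X), WaiterWins board b Q t C W →
      WaiterWins board b Q (t+1) C W := by
  intro t
  induction t with
  | zero => intro C W hw; exact Or.inl hw
  | succ t ih =>
    intro C W hw
    rcases hw with hw | ⟨O, h1, h2, h3, h4⟩
    · exact Or.inl hw
    · exact Or.inr ⟨O, h1, h2, h3, fun x hx => ih _ _ (h4 x hx)⟩

lemma ww_le {X : Type*} [DecidableEq X] {board : Finset X} {b : ℕ}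
    {Q : Finset X → Finset X → Prop} {t t' : ℕ} (htt : t ≤ t') {C W : Finset X}
    (h : WaiterWins board b Q t C W) : WaiterWins board b Q t' C W := by
  induction htt with
  | refl => exact h
  | step _ ih => exact ww_le_succ _ _ _ ih

lemma ww_comp {X : Type*} [DecidableEq X] {board : Finset X} {b : ℕ}
    {Q Q' : Finset X → Finset X → Prop} {t' : ℕ}
    (h : ∀ C W, Q C W → WaiterWins board b Q' t' C W) :
    ∀ (t : ℕ) (C W : Finset X), WaiterWins board b Q t C W →
      WaiterWins board b Q' (t + t') C W := by
  intro t
  induction t with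
  | zero => intro C W hw; simpa using h _ _ hw
  | succ t ih =>
    intro C W hw
    rcases hw with hw | ⟨O, h1, h2, h3, h4⟩
    · exact ww_le (by omega) (h _ _ hw)
    · have : t + 1 + t' = (t + t') + 1 := by omega
      rw [this]
      exact Or.inr ⟨O, h1, h2, h3, fun x hx => ih _ _ (h4 x hx)⟩

lemma ww_step {X : Type*} [DecidableEq X] {board : Finset X}
    {Q : Finset X → Finset X → Prop} {t : ℕ} {C W : Finset X} {e f : X}
    (he : e ∈ board) (hf : f ∈ board) (hef : e ≠ f)
    (he' : e ∉ C ∪ W) (hf' : f ∉ C ∪ W)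
    (h1 : WaiterWins board 1 Q t (insert e C) (insert f W))
    (h2 : WaiterWins board 1 Q t (insert f C) (insert e W)) :
    WaiterWins board 1 Q (t+1) C W := by
  right
  have hsub : ({e, f} : Finset X) ⊆ board \ (C ∪ W) := by
    intro x hx
    simp only [Finset.mem_insert, Finset.mem_singleton] at hx
    rcases hx with rfl | rfl <;> simp only [Finset.mem_sdiff] <;> exact ⟨by assumption, by assumption⟩
  have hcard : ({e, f} : Finset X).card = 2 := Finset.card_pair hef
  refine ⟨{e, f}, ⟨e, by simp⟩, hsub, ?_, ?_⟩
  · have := Finset.card_le_card hsub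
    rw [hcard] at this ⊢
    omega
  · intro x hx
    simp only [Finset.mem_insert, Finset.mem_singleton] at hx
    rcases hx with rfl | rfl
    · have : W ∪ ({x, f} : Finset X).erase x = insert f W := by
        ext y; simp only [Finset.mem_union, Finset.mem_erase, Finset.mem_insert, Finset.mem_singleton]
        grind
      rw [this]; exact h1
    · have : W ∪ ({e, x} : Finset X).erase x = insert e W := by
        ext y; simp only [Finset.mem_union, Finset.mem_erase, Finset.mem_insert, Finset.mem_singleton]
        grind
      rw [this]; exact h2

/-- In `t` rounds Client gets at most `t` elements. -/
lemma ww_card {X : Type*} [DecidableEq X] {board : Finset X} {b : ℕ}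
    {Q : Finset X → Finset X → Prop} :
    ∀ (t : ℕ) (C W : Finset X), WaiterWins board b Q t C W →
      ∃ C' W', Q C' W' ∧ C'.card ≤ C.card + t := by
  intro t
  induction t with
  | zero => intro C W hw; exact ⟨C, W, hw, by simp⟩
  | succ t ih =>
    intro C W hw
    rcases hw with hw | ⟨O, ⟨x, hx⟩, h2, h3, h4⟩
    · exact ⟨C, W, hw, by omega⟩
    · obtain ⟨C', W', hq, hc⟩ := ih _ _ (h4 x hx)
      have := Finset.card_insert_le x C
      exact ⟨C', W', hq, by omega⟩

/-! ## Lower bound -/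

lemma path_even_empty {V : Type*} [DecidableEq V] {G : SimpleGraph V} {u v : V} (p : G.Walk u v)
    (hp : p.IsPath) (D : Finset (Sym2 V)) (hD : ∀ e ∈ D, e ∈ p.edges)
    (hev : ∀ x : V, Even (D.filter (fun e => x ∈ e)).card) : D = ∅ := by
  induction p with
  | nil => 
    apply Finset.eq_empty_of_forall_notMem
    intro e he
    simpa using hD e he
  | @cons u w v h q ih =>
    rw [SimpleGraph.Walk.cons_isPath_iff] at hp
    apply ih hp.1
    intro e he
    have h1 := hD e he
    rw [SimpleGraph.Walk.edges_cons, List.mem_cons] at h1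
    rcases h1 with rfl | h1
    · exfalso
      have h2 : D.filter (fun e => u ∈ e) = {s(u, w)} := by
        ext e'
        simp only [Finset.mem_filter, Finset.mem_singleton]
        constructor
        · rintro ⟨h3, h4⟩
          have h5 := hD e' h3
          rw [SimpleGraph.Walk.edges_cons, List.mem_cons] at h5
          rcases h5 with h5 | h5
          · exact h5
          · exact absurd (SimpleGraph.Walk.mem_support_of_mem_edges h5 h4) hp.2
        · rintro rfl
          exact ⟨he, by simp⟩
      have := hev u
      rw [h2] at this
      simp at this
    · exact h1

lemma even_symmDiff {α : Type*} [DecidableEq α] (A B : Finset α) (P : α → Prop) [DecidablePred P]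
    (hA : Even (A.filter P).card) (hB : Even (B.filter P).card) :
    Even ((symmDiff A B).filter P).card := by
  have h : (symmDiff A B).filter P = symmDiff (A.filter P) (B.filter P) := by
    ext x; simp only [Finset.mem_filter, Finset.mem_symmDiff]; tauto
  rw [h]
  have h1 := Finset.card_sdiff_add_card_inter (A.filter P) (B.filter P)
  have h2 := Finset.card_sdiff_add_card_inter (B.filter P) (A.filter P)
  rw [Finset.inter_comm] at h2
  have h3 : (symmDiff (A.filter P) (B.filter P)).card
      = (A.filter P \ B.filter P).card + (B.filter P \ A.filter P).card := by
    rw [symmDiff_def, Finset.sup_eq_union, Finset.card_union_of_disjoint]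
    exact disjoint_sdiff_sdiff
  rw [h3]
  grind

lemma cycle_even {V : Type*} [DecidableEq V] {G : SimpleGraph V} {u : V} (p : G.Walk u u)
    (hp : p.IsCycle) (x : V) : Even (p.edges.toFinset.filter (fun e => x ∈ e)).card := by
  have h := hp.isCircuit.isTrail.even_countP_edges_iff x
  have h1 : p.edges.toFinset.filter (fun e => x ∈ e)
      = (p.edges.filter (fun e => x ∈ e)).toFinset := by
    ext e; simp
  rw [h1, List.toFinset_card_of_nodup (hp.isCircuit.isTrail.edges_nodup.filter _)]
  rw [← List.countP_eq_length_filter]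
  exact h.2 (fun h => absurd rfl h)

lemma pc_card {n : ℕ} (hn : 3 ≤ n) (C : Finset (Sym2 (Fin n)))
    (hC : ∃ A ∈ PCfamily n, A ⊆ C) : n ≤ C.card + 1 ∧ n - 2 ≤ 2 ^ (C.card + 1 - n) := by
  obtain ⟨A, ⟨-, hA⟩, hAC⟩ := hC
  obtain ⟨u, p, hp, hlen, hedge⟩ := hA n hn le_rfl
  -- the spanning path
  obtain ⟨w, h, q, rfl⟩ : ∃ (w : Fin n) (h : (⊤ : SimpleGraph (Fin n)).Adj u w) (q : _),
      p = SimpleGraph.Walk.cons h q := by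
    cases p with
    | nil => simp at hp
    | cons h q => exact ⟨_, h, q, rfl⟩
  rw [SimpleGraph.Walk.cons_isCycle_iff] at hp
  have hq := hp.1
  have hqlen : q.length = n - 1 := by
    simp at hlen; omega
  set P := q.edges.toFinset with hP
  have hPcard : P.card = n - 1 := by
    rw [hP, List.toFinset_card_of_nodup hq.isTrail.edges_nodup, SimpleGraph.Walk.length_edges, hqlen]
  have hPC : P ⊆ C := by
    intro e he
    apply hAC; apply hedge
    rw [SimpleGraph.Walk.edges_cons]
    rw [hP, List.mem_toFinset] at he
    exact List.mem_cons_of_mem _ he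
  have hcard := Finset.card_le_card hPC
  have hsd := Finset.card_sdiff_of_subset hPC
  refine ⟨by omega, ?_⟩
  have hA' : ∀ l : ℕ, ∃ D : Finset (Sym2 (Fin n)), 3 ≤ l → l ≤ n → D ⊆ C ∧ D.card = l ∧
      ∀ x, Even (D.filter (fun e => x ∈ e)).card := by
    intro l
    by_cases h3 : 3 ≤ l ∧ l ≤ n
    · obtain ⟨u, p, hp, hlen, hedge⟩ := hA l h3.1 h3.2
      refine ⟨p.edges.toFinset, fun _ _ => ⟨?_, ?_, cycle_even p hp⟩⟩
      · intro e he
        exact hAC (hedge e (List.mem_toFinset.1 he))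
      · rw [List.toFinset_card_of_nodup hp.isCircuit.isTrail.edges_nodup, SimpleGraph.Walk.length_edges, hlen]
    · exact ⟨∅, fun h1 h2 => absurd ⟨h1, h2⟩ h3⟩
  choose D hD using hA'
  have hcardle : (Finset.Icc 3 n).card ≤ (C \ P).powerset.card := by
    apply Finset.card_le_card_of_injOn (fun l => D l \ P)
    · intro l hl
      simp only [Finset.coe_Icc, Set.mem_Icc] at hl
      simp only [Finset.coe_powerset, Set.mem_preimage, Set.mem_powerset_iff, Finset.coe_subset]
      exact Finset.sdiff_subset_sdiff (hD l hl.1 hl.2).1 le_rfl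
    · intro l hl l' hl' heq
      simp only [Finset.coe_Icc, Set.mem_Icc] at hl hl'
      obtain ⟨-, h2, h3⟩ := hD l hl.1 hl.2
      obtain ⟨-, h2', h3'⟩ := hD l' hl'.1 hl'.2
      have : symmDiff (D l) (D l') = ∅ := by
        apply path_even_empty q hq
        · intro e he
          by_contra hne
          have h4 : e ∈ D l \ P ↔ e ∈ D l' \ P := by
            have : D l \ P = D l' \ P := heq
            rw [this]
          simp only [Finset.mem_sdiff, hP, List.mem_toFinset, Finset.mem_symmDiff] at h4 he
          tauto
        · intro x
          exact even_symmDiff _ _ _ (h3 x) (h3' x)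
      have h5 : D l = D l' := symmDiff_eq_bot.1 this
      rw [← h2, ← h2', h5]
  rw [Finset.card_powerset, hsd, hPcard, Nat.card_Icc] at hcardle
  have : C.card - (n - 1) = C.card + 1 - n := by omega
  rw [this] at hcardle
  omega

/-! ## Building a path -/

lemma mem_Kedges {n : ℕ} {a b : Fin n} (h : a ≠ b) : s(a, b) ∈ Kedges n := by
  simp [Kedges, h]

/-- Consecutive pairs of a list. -/
def pathE {V : Type*} : List V → List (Sym2 V)
  | [] => []
  | [_] => []
  | a :: b :: l => s(a, b) :: pathE (b :: l)

@[simp] lemma pathE_nil {V : Type*} : pathE ([] : List V) = [] := rfl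
@[simp] lemma pathE_single {V : Type*} (a : V) : pathE [a] = [] := rfl
@[simp] lemma pathE_cons_cons {V : Type*} (a b : V) (l : List V) :
    pathE (a :: b :: l) = s(a, b) :: pathE (b :: l) := rfl

lemma pathE_append {V : Type*} (l₁ : List V) (a : V) (l₂ : List V) :
    pathE (l₁ ++ a :: l₂) = pathE (l₁ ++ [a]) ++ pathE (a :: l₂) := by
  induction l₁ with
  | nil => simp
  | cons b l ih =>
    cases l with
    | nil => simp
    | cons c l => simpa using ih

lemma pathE_snoc {V : Type*} (l : List V) (a b : V) :
    pathE (l ++ [a, b]) = pathE (l ++ [a]) ++ [s(a, b)] := by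
  rw [pathE_append]; simp

lemma pathE_mem_mem {V : Type*} {l : List V} {e : Sym2 V} (he : e ∈ pathE l) {x : V}
    (hx : x ∈ e) : x ∈ l := by
  induction l with
  | nil => simp at he
  | cons a l ih =>
    cases l with
    | nil => simp at he
    | cons b l =>
      simp only [pathE_cons_cons, List.mem_cons] at he
      rcases he with rfl | he
      · simp only [Sym2.mem_iff] at hx; rcases hx with rfl | rfl <;> simp
      · exact List.mem_cons_of_mem _ (ih he)

/-- The path-extension outcome. -/
def ExtPost {n : ℕ} (Cl W : Finset (Sym2 (Fin n))) (v : Fin n) (U F : Finset (Fin n)) (r : ℕ)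
    (Cl' W' : Finset (Sym2 (Fin n))) : Prop :=
  ∃ q : List (Fin n), q.length = r ∧ q.Nodup ∧ (∀ x ∈ q, x ∈ F) ∧
    (∀ e ∈ pathE (v :: q), e ∈ Cl') ∧ Cl ⊆ Cl' ∧
    (∀ e ∈ Cl' ∪ W', e ∈ Cl ∪ W ∨ ((∀ x ∈ e, x ∈ insert v U) ∧ (∃ x ∈ e, x ∈ U) ∧
      (e ∈ pathE (v :: q) ∨ ∃ y ∈ e, y ∈ U ∧ y ∉ q))) ∧
    (∀ a b, (a = q.getLastD v ∨ (a ∈ U ∧ a ∉ q)) → (b = q.getLastD v ∨ (b ∈ U ∧ b ∉ q)) → a ≠ b →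
      s(a, b) ∉ Cl' ∪ W')

lemma ext_lemma {n : ℕ} (r : ℕ) : ∀ (v : Fin n) (U F : Finset (Fin n))
    (Cl W : Finset (Sym2 (Fin n))), v ∉ U → F ⊆ U → 2 * r ≤ F.card →
    (∀ a ∈ insert v U, ∀ b ∈ insert v U, a ≠ b → s(a, b) ∉ Cl ∪ W) →
    WaiterWins (Kedges n) 1 (ExtPost Cl W v U F r) r Cl W := by
  induction r with
  | zero =>
    intro v U F Cl W hv hF hr hno
    refine ww_of_win _ _ _ ⟨[], rfl, List.nodup_nil, by simp, by simp, le_rfl, ?_, ?_⟩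
    · intro e he; exact Or.inl he
    · intro a b ha hb hab
      apply hno _ _ _ _ hab
      · simpa using ha
      · simpa using hb
  | succ r ih =>
    intro v U F Cl W hv hF hr hno
    obtain ⟨x, hx, y, hy, hxy⟩ := Finset.one_lt_card.1 (show 1 < F.card by omega)
    have key : ∀ x ∈ F, ∀ y ∈ F, x ≠ y →
        WaiterWins (Kedges n) 1 (ExtPost Cl W v U F (r+1)) r (insert s(v, x) Cl)
          (insert s(v, y) W) := by
      intro x hx y hy hxy
      have hvx : v ≠ x := fun h => hv (h ▸ hF hx)
      have hvy : v ≠ y := fun h => hv (h ▸ hF hy)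
      have hcl : ∀ e, e ∈ insert s(v, x) Cl ∪ insert s(v, y) W ↔
          (e = s(v, x) ∨ e = s(v, y) ∨ e ∈ Cl ∪ W) := by
        intro e; simp only [Finset.mem_union, Finset.mem_insert]; tauto
      have := ih x (U.erase x) ((F.erase x).erase y) (insert s(v, x) Cl) (insert s(v, y) W)
        (by simp) (by
          intro z hz; simp only [Finset.mem_erase] at hz ⊢; exact ⟨hz.2.1, hF hz.2.2⟩)
        (by
          rw [Finset.card_erase_of_mem (by simp [hy, hxy.symm]), Finset.card_erase_of_mem hx]
          omega)
        (by
          intro a ha b hb hab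
          have ha' : a ∈ U := by
            simp only [Finset.mem_insert, Finset.mem_erase] at ha
            rcases ha with rfl | ha
            · exact hF hx
            · exact ha.2
          have hb' : b ∈ U := by
            simp only [Finset.mem_insert, Finset.mem_erase] at hb
            rcases hb with rfl | hb
            · exact hF hx
            · exact hb.2
          rw [hcl]
          rintro (h | h | h)
          · have : v ∈ s(a, b) := by rw [h]; simp
            simp only [Sym2.mem_iff] at this
            rcases this with rfl | rfl <;> contradiction
          · have : v ∈ s(a, b) := by rw [h]; simp
            simp only [Sym2.mem_iff] at this
            rcases this with rfl | rfl <;> contradiction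
          · exact hno a (by simp [ha']) b (by simp [hb']) hab h)
      refine ww_mono ?_ _ _ _ this
      rintro C' W' ⟨q, h1, h2, h3, h4, h5, h6, h7⟩
      have hxq : x ∉ q := fun h => by simpa using h3 x h
      have hyq : y ∉ q := fun h => by simpa using h3 y h
      refine ⟨x :: q, by simp [h1], List.nodup_cons.2 ⟨hxq, h2⟩, ?_, ?_, ?_, ?_, ?_⟩
      · intro z hz
        rcases List.mem_cons.1 hz with rfl | hz
        · exact hx
        · have := h3 z hz; simp only [Finset.mem_erase] at this; exact this.2.2
      · intro e he
        simp only [pathE_cons_cons, List.mem_cons] at he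
        rcases he with rfl | he
        · exact h5 (by simp)
        · exact h4 e he
      · exact (Finset.subset_insert _ _).trans h5
      · intro e he
        rcases h6 e he with h | ⟨ha, ⟨t, ht1, ht2⟩, hb⟩
        · rw [hcl] at h
          rcases h with rfl | rfl | h
          · right
            refine ⟨?_, ⟨x, by simp, hF hx⟩, by simp⟩
            intro z hz; simp only [Sym2.mem_iff] at hz
            rcases hz with rfl | rfl
            · simp
            · simp [hF hx]
          · right
            refine ⟨?_, ⟨y, by simp, hF hy⟩, Or.inr ⟨y, by simp, hF hy, by simp [hyq, hxy.symm]⟩⟩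
            intro z hz; simp only [Sym2.mem_iff] at hz
            rcases hz with rfl | rfl
            · simp
            · simp [hF hy]
          · exact Or.inl h
        · right
          refine ⟨?_, ⟨t, ht1, (Finset.mem_erase.1 ht2).2⟩, ?_⟩
          · intro z hz
            have := ha z hz
            simp only [Finset.mem_insert, Finset.mem_erase] at this ⊢
            rcases this with rfl | h
            · exact Or.inr (hF hx)
            · exact Or.inr h.2
          · rcases hb with hb | ⟨z, hz1, hz2, hz3⟩
            · left; simp [hb]
            · right
              simp only [Finset.mem_erase] at hz2
              exact ⟨z, hz1, hz2.2, by simp [hz2.1, hz3]⟩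
      · intro a b ha hb hab
        apply h7 _ _ _ _ hab
        · rw [List.getLastD_cons] at ha
          simpa [and_assoc, and_left_comm, and_comm] using ha
        · rw [List.getLastD_cons] at hb
          simpa [and_assoc, and_left_comm, and_comm] using hb
    have hvx : v ≠ x := fun h => hv (h ▸ hF hx)
    have hvy : v ≠ y := fun h => hv (h ▸ hF hy)
    refine ww_step (mem_Kedges hvx) (mem_Kedges hvy) ?_ (hno _ (by simp) _ (by simp [hF hx]) hvx)
      (hno _ (by simp) _ (by simp [hF hy]) hvy) (key x hx y hy hxy) (key y hy x hx hxy.symm)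
    intro h
    simp only [Sym2.eq_iff] at h
    grind

/-- Extend the path through all but one of the vertices of `U`. -/
def RestPost {n : ℕ} (Cl W : Finset (Sym2 (Fin n))) (v : Fin n) (U : Finset (Fin n)) (m : ℕ)
    (Cl' W' : Finset (Sym2 (Fin n))) : Prop :=
  ∃ (q : List (Fin n)) (z : Fin n), q.length = m ∧ q.Nodup ∧ z ∉ q ∧
    (∀ x, x ∈ U ↔ x = z ∨ x ∈ q) ∧
    (∀ e ∈ pathE (v :: q), e ∈ Cl') ∧ Cl ⊆ Cl' ∧
    (∀ e ∈ Cl' ∪ W', e ∈ Cl ∪ W ∨ ((∀ x ∈ e, x ∈ insert v U) ∧ (∃ x ∈ e, x ∈ U)))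

lemma rest_lemma {n : ℕ} (m : ℕ) : ∀ (v : Fin n) (U : Finset (Fin n))
    (Cl W : Finset (Sym2 (Fin n))), v ∉ U → U.card = m + 1 →
    (∀ a ∈ insert v U, ∀ b ∈ insert v U, a ≠ b → s(a, b) ∉ Cl ∪ W) →
    WaiterWins (Kedges n) 1 (RestPost Cl W v U m) m Cl W := by
  induction m with
  | zero =>
    intro v U Cl W hv hU hno
    obtain ⟨z, rfl⟩ := Finset.card_eq_one.1 hU
    exact ww_of_win _ _ _ ⟨[], z, rfl, List.nodup_nil, by simp, by simp, by simp, le_rfl,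
      fun e he => Or.inl he⟩
  | succ m ih =>
    intro v U Cl W hv hU hno
    have h1 := ext_lemma 1 v U U Cl W hv le_rfl (by omega) hno
    have := ww_comp (Q' := RestPost Cl W v U (m+1)) (t' := m) ?_ _ _ _ h1
    · exact ww_le (by omega) this
    · rintro C' W' ⟨q, g1, g2, g3, g4, g5, g6, g7⟩
      obtain ⟨x, rfl⟩ := List.length_eq_one_iff.1 g1
      have hx : x ∈ U := g3 x (by simp)
      have := ih x (U.erase x) C' W' (by simp) (by rw [Finset.card_erase_of_mem hx]; omega)
        (by
          intro a ha b hb hab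
          apply g7 _ _ _ _ hab
          · simpa [and_comm] using ha
          · simpa [and_comm] using hb)
      refine ww_mono ?_ _ _ _ this
      rintro C'' W'' ⟨q, z, f1, f2, f3, f4, f5, f6, f7⟩
      refine ⟨x :: q, z, by simp [f1], ?_, ?_, ?_, ?_, g5.trans f6, ?_⟩
      · refine List.nodup_cons.2 ⟨fun h => ?_, f2⟩
        have := (f4 x).2 (Or.inr h)
        simp at this
      · have := (f4 z).2 (Or.inl rfl)
        simp only [Finset.mem_erase] at this
        simp [this.1, f3]
      · intro y
        have := f4 y
        simp only [Finset.mem_erase] at this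
        simp only [List.mem_cons]
        by_cases hy : y = x
        · subst hy; simp [hx]
        · simp only [hy, ne_eq, not_false_eq_true, true_and] at this
          rw [this]; simp [hy]
      · intro e he
        simp only [pathE_cons_cons, List.mem_cons] at he
        rcases he with rfl | he
        · exact f6 (g4 _ (by simp))
        · exact f5 _ he
      · intro e he
        rcases f7 e he with h | ⟨ha, t, ht1, ht2⟩
        · rcases g6 e h with h | h
          · exact Or.inl h
          · exact Or.inr ⟨h.1, h.2.1⟩
        · right
          refine ⟨?_, t, ht1, (Finset.mem_erase.1 ht2).2⟩
          intro z hz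
          have := ha z hz
          simp only [Finset.mem_insert, Finset.mem_erase] at this ⊢
          rcases this with rfl | h
          · exact Or.inr hx
          · exact Or.inr h.2

/-! ## Absorbing leftover vertices -/

lemma pathE_insert {V : Type*} (S : Finset (Sym2 V)) (l₁ : List V) (a b x : V) (l₂ : List V)
    (h : ∀ e ∈ pathE (l₁ ++ a :: b :: l₂), e ∈ S) (h1 : s(x, a) ∈ S) (h2 : s(x, b) ∈ S) :
    ∀ e ∈ pathE (l₁ ++ a :: x :: b :: l₂), e ∈ S := by
  intro e he
  rw [pathE_append] at h he
  simp only [pathE_cons_cons, List.mem_append, List.mem_cons] at h he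
  rcases he with he | rfl | rfl | he
  · exact h e (Or.inl he)
  · rw [Sym2.eq_swap]; exact h1
  · exact h2
  · exact h e (by tauto)

def AbsPost {n : ℕ} (Cl W : Finset (Sym2 (Fin n))) (xs pre D post : List (Fin n))
    (Cl' W' : Finset (Sym2 (Fin n))) : Prop :=
  ∃ D' : List (Fin n), D'.Perm (xs ++ D) ∧ (∀ e ∈ pathE (pre ++ D' ++ post), e ∈ Cl') ∧
    Cl ⊆ Cl' ∧ ∀ e ∈ Cl' ∪ W', e ∈ Cl ∪ W ∨ ∃ x ∈ xs, ∃ d ∈ D, e = s(x, d)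

lemma absorb0 {n : ℕ} (Cl W : Finset (Sym2 (Fin n))) (x : Fin n) (pre post : List (Fin n))
    (a b c : Fin n) (hac : a ≠ c) (hxa : x ≠ a) (hxc : x ≠ c)
    (hb : s(x, b) ∈ Cl) (ha : s(x, a) ∉ Cl ∪ W) (hc : s(x, c) ∉ Cl ∪ W)
    (hp : ∀ e ∈ pathE (pre ++ a :: b :: c :: post), e ∈ Cl) :
    WaiterWins (Kedges n) 1 (AbsPost Cl W [x] pre [a, b, c] post) 1 Cl W := by
  refine ww_step (mem_Kedges hxa) (mem_Kedges hxc) ?_ ha hc ?_ ?_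
  · intro h; simp only [Sym2.eq_iff] at h; grind
  · refine ww_of_win _ _ _ ⟨[a, x, b, c], ?_, ?_, by simp, ?_⟩
    · exact List.Perm.swap x a [b, c]
    · have := pathE_insert (insert s(x, a) Cl) pre a b x (c :: post)
        (fun e he => by simp [hp e he]) (by simp) (by simp [hb])
      simpa using this
    · intro e he
      simp only [Finset.mem_union, Finset.mem_insert, List.mem_cons, List.mem_singleton, exists_eq_or_imp, List.not_mem_nil, exists_eq_left] at he ⊢
      grind
  · refine ww_of_win _ _ _ ⟨[a, b, x, c], ?_, ?_, by simp, ?_⟩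
    · exact ((List.Perm.swap x b [c]).cons a).trans (List.Perm.swap x a [b, c])
    · have := pathE_insert (insert s(x, c) Cl) (pre ++ [a]) b c x post
        (fun e he => by
          have := hp e (by simpa using he)
          simp [this]) (by simp [hb]) (by simp)
      simpa using this
    · intro e he
      simp only [Finset.mem_union, Finset.mem_insert, List.mem_cons, List.mem_singleton, exists_eq_or_imp, List.not_mem_nil, exists_eq_left] at he ⊢
      grind

lemma absorb1 {n : ℕ} (Cl W : Finset (Sym2 (Fin n))) (x : Fin n) (pre post : List (Fin n))
    (a b c d e f : Fin n) (hnd : [x, a, b, c, d, e, f].Nodup)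
    (hfree : ∀ y ∈ [a, b, c, d, e, f], s(x, y) ∉ Cl ∪ W)
    (hp : ∀ e' ∈ pathE (pre ++ [a, b, c, d, e, f] ++ post), e' ∈ Cl) :
    WaiterWins (Kedges n) 1 (AbsPost Cl W [x] pre [a, b, c, d, e, f] post) 2 Cl W := by
  have hinj : ∀ y z, y ∈ [a, b, c, d, e, f] → z ∈ [a, b, c, d, e, f] → y ≠ z → s(x, y) ≠ s(x, z) := by
    intro y z hy hz hyz h
    simp only [Sym2.eq_iff] at h
    grind
  have hxb : x ≠ b := by intro h; subst h; simp at hnd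
  have hxe : x ≠ e := by intro h; subst h; simp at hnd
  have hbe : b ≠ e := by intro h; subst h; simp at hnd
  have hU : ∀ (y z : Fin n) (e' : Sym2 (Fin n)), e' ∈ insert s(x, y) Cl ∪ insert s(x, z) W ↔
      e' = s(x, y) ∨ e' = s(x, z) ∨ e' ∈ Cl ∪ W := by
    intro y z e'; simp only [Finset.mem_union, Finset.mem_insert]; tauto
  refine ww_step (mem_Kedges hxb) (mem_Kedges hxe) (hinj b e (by simp) (by simp) hbe)
    (hfree b (by simp)) (hfree e (by simp)) ?_ ?_
  · have hab : a ≠ b := by intro h; subst h; simp at hnd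
    have hcb : c ≠ b := by intro h; subst h; simp at hnd
    have hae : a ≠ e := by intro h; subst h; simp at hnd
    have hce : c ≠ e := by intro h; subst h; simp at hnd
    refine ww_mono ?_ _ _ _ (absorb0 (insert s(x, b) Cl) (insert s(x, e) W) x pre ([d, e, f] ++ post)
      a b c (by intro h; subst h; simp at hnd) (by intro h; subst h; simp at hnd)
      (by intro h; subst h; simp at hnd) (by simp) ?_ ?_ ?_)
    · rintro C' W' ⟨D', h1, h2, h3, h4⟩
      refine ⟨D' ++ [d, e, f], ?_, ?_, (Finset.subset_insert _ _).trans h3, ?_⟩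
      · simpa using h1.append_right [d, e, f]
      · simpa using h2
      · intro e' he'
        rcases h4 e' he' with h | ⟨y, hy, z, hz, rfl⟩
        · rw [hU] at h
          rcases h with rfl | rfl | h
          · exact Or.inr ⟨x, by simp, b, by simp, rfl⟩
          · exact Or.inr ⟨x, by simp, e, by simp, rfl⟩
          · exact Or.inl h
        · exact Or.inr ⟨y, hy, z, by simp at hz ⊢; tauto, rfl⟩
    · rw [hU]
      have h1 := hinj a b (by simp) (by simp) hab
      have h2 := hinj a e (by simp) (by simp) hae
      have h3 := hfree a (by simp)
      tauto
    · rw [hU]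
      have h1 := hinj c b (by simp) (by simp) hcb
      have h2 := hinj c e (by simp) (by simp) hce
      have h3 := hfree c (by simp)
      tauto
    · intro e' he'
      have := hp e' (by simpa using he')
      simp [this]
  · have hdb : d ≠ b := by intro h; subst h; simp at hnd
    have hfb : f ≠ b := by intro h; subst h; simp at hnd
    have hde : d ≠ e := by intro h; subst h; simp at hnd
    have hfe : f ≠ e := by intro h; subst h; simp at hnd
    refine ww_mono ?_ _ _ _ (absorb0 (insert s(x, e) Cl) (insert s(x, b) W) x (pre ++ [a, b, c]) post
      d e f (by intro h; subst h; simp at hnd) (by intro h; subst h; simp at hnd)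
      (by intro h; subst h; simp at hnd) (by simp) ?_ ?_ ?_)
    · rintro C' W' ⟨D', h1, h2, h3, h4⟩
      refine ⟨[a, b, c] ++ D', ?_, ?_, (Finset.subset_insert _ _).trans h3, ?_⟩
      · refine (h1.append_left [a, b, c]).trans ?_
        exact List.perm_middle
      · simpa using h2
      · intro e' he'
        rcases h4 e' he' with h | ⟨y, hy, z, hz, rfl⟩
        · rw [hU] at h
          rcases h with rfl | rfl | h
          · exact Or.inr ⟨x, by simp, e, by simp, rfl⟩
          · exact Or.inr ⟨x, by simp, b, by simp, rfl⟩
          · exact Or.inl h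
        · exact Or.inr ⟨y, hy, z, by simp at hz ⊢; tauto, rfl⟩
    · rw [hU]
      have h1 := hinj d b (by simp) (by simp) hdb
      have h2 := hinj d e (by simp) (by simp) hde
      have h3 := hfree d (by simp)
      tauto
    · rw [hU]
      have h1 := hinj f b (by simp) (by simp) hfb
      have h2 := hinj f e (by simp) (by simp) hfe
      have h3 := hfree f (by simp)
      tauto
    · intro e' he'
      have := hp e' (by simpa using he')
      simp [this]

lemma absorb_all {n : ℕ} (xs : List (Fin n)) : ∀ (pre D post : List (Fin n))
    (Cl W : Finset (Sym2 (Fin n))), 6 * xs.length ≤ D.length → (xs ++ D).Nodup →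
    (∀ x ∈ xs, ∀ d ∈ D, s(x, d) ∉ Cl ∪ W) →
    (∀ e ∈ pathE (pre ++ D ++ post), e ∈ Cl) →
    WaiterWins (Kedges n) 1 (AbsPost Cl W xs pre D post) (2 * xs.length) Cl W := by
  induction xs with
  | nil =>
    intro pre D post Cl W _ _ _ hp
    exact ww_of_win _ _ _ ⟨D, by simp, hp, le_rfl, fun e he => Or.inl he⟩
  | cons x xs ih =>
    intro pre D post Cl W hlen hnd hfree hp
    obtain ⟨a, b, c, d, e, f, D2, rfl⟩ : ∃ a b c d e f D2, D = [a, b, c, d, e, f] ++ D2 := by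
      simp only [List.length_cons] at hlen
      match D, hlen with
      | a :: b :: c :: d :: e :: f :: D2, _ => exact ⟨a, b, c, d, e, f, D2, rfl⟩
    have h1 := absorb1 Cl W x pre (D2 ++ post) a b c d e f
      (by
        refine hnd.sublist ?_
        simp only [List.cons_append]
        refine List.Sublist.cons_cons _ ?_
        refine List.Sublist.trans ?_ (List.sublist_append_right _ _)
        simp)
      (fun y hy => hfree x (by simp) y (by simp at hy ⊢; tauto))
      (by simpa using hp)
    have := ww_comp (Q' := AbsPost Cl W (x :: xs) pre ([a, b, c, d, e, f] ++ D2) post)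
      (t' := 2 * xs.length) ?_ _ _ _ h1
    · exact ww_le (by simp; omega) this
    · rintro C' W' ⟨D', g1, g2, g3, g4⟩
      have := ih (pre ++ D') D2 post C' W' (by simp at hlen ⊢; omega)
        (by
          refine hnd.sublist ?_
          refine List.Sublist.append (List.sublist_cons_self _ _) (List.sublist_append_right _ _))
        (by
          intro y hy z hz hcl
          rcases g4 _ hcl with h | ⟨x', hx', d', hd', h⟩
          · exact hfree y (by simp [hy]) z (by simp [hz]) h
          · simp only [List.mem_singleton] at hx'
            subst hx'
            simp only [List.cons_append, List.nodup_cons, List.mem_append] at hnd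
            simp only [Sym2.eq_iff] at h
            rcases h with ⟨rfl, rfl⟩ | ⟨rfl, rfl⟩
            · exact hnd.1 (Or.inl hy)
            · exact hnd.1 (Or.inr (by simp [hz])))
        (by simpa using g2)
      refine ww_mono ?_ _ _ _ this
      rintro C'' W'' ⟨D'', f1, f2, f3, f4⟩
      refine ⟨D' ++ D'', ?_, by simpa using f2, g3.trans f3, ?_⟩
      · refine (g1.append f1).trans ?_
        simp only [List.cons_append, List.nil_append]
        refine List.Perm.cons _ ?_
        have : (a :: b :: c :: d :: e :: f :: (xs ++ D2)) = [a, b, c, d, e, f] ++ (xs ++ D2) := rfl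
        rw [this, ← List.append_assoc]
        have h2 : xs ++ a :: b :: c :: d :: e :: f :: D2 = (xs ++ [a, b, c, d, e, f]) ++ D2 := by simp
        rw [h2]
        exact List.Perm.append_right _ List.perm_append_comm
      · intro e' he'
        rcases f4 e' he' with h | ⟨y, hy, z, hz, rfl⟩
        · rcases g4 e' h with h | ⟨y, hy, z, hz, rfl⟩
          · exact Or.inl h
          · exact Or.inr ⟨y, by simp at hy ⊢; tauto, z, by simp at hz ⊢; tauto, rfl⟩
        · exact Or.inr ⟨y, by simp [hy], z, by simp [hz], rfl⟩

/-! ## Closing the cycle -/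

lemma close0 {n : ℕ} (Cl W : Finset (Sym2 (Fin n))) (w t y y' : Fin n) (hyy : y ≠ y')
    (hty : t ≠ y) (hty' : t ≠ y') (h1 : s(w, y) ∈ Cl) (h2 : s(w, y') ∈ Cl)
    (h3 : s(t, y) ∉ Cl ∪ W) (h4 : s(t, y') ∉ Cl ∪ W) :
    WaiterWins (Kedges n) 1 (fun Cl' W' => ∃ x, (x = y ∨ x = y') ∧ s(t, x) ∈ Cl' ∧ s(w, x) ∈ Cl' ∧
      Cl ⊆ Cl' ∧ ∀ e ∈ Cl' ∪ W', e ∈ Cl ∪ W ∨ e = s(t, y) ∨ e = s(t, y')) 1 Cl W := by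
  refine ww_step (mem_Kedges hty) (mem_Kedges hty') ?_ h3 h4 ?_ ?_
  · intro h; simp only [Sym2.eq_iff] at h; grind
  · refine ww_of_win _ _ _ ⟨y, Or.inl rfl, by simp, by simp [h1], by simp, ?_⟩
    intro e he; simp only [Finset.mem_union, Finset.mem_insert] at he ⊢; tauto
  · refine ww_of_win _ _ _ ⟨y', Or.inr rfl, by simp, by simp [h2], by simp, ?_⟩
    intro e he; simp only [Finset.mem_union, Finset.mem_insert] at he ⊢; tauto

def ClosePost {n : ℕ} (Cl W : Finset (Sym2 (Fin n))) (w t : Fin n) (X : List (Fin n))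
    (Cl' W' : Finset (Sym2 (Fin n))) : Prop :=
  ∃ x ∈ X, s(t, x) ∈ Cl' ∧ s(w, x) ∈ Cl' ∧
      Cl ⊆ Cl' ∧ ∀ e ∈ Cl' ∪ W', e ∈ Cl ∪ W ∨ ∃ y ∈ X, (e = s(w, y) ∨ e = s(t, y))

lemma close_lemma {n : ℕ} (Cl W : Finset (Sym2 (Fin n))) (w t a b c d : Fin n)
    (hnd : [w, t, a, b, c, d].Nodup)
    (hw : ∀ x ∈ [a, b, c, d], s(w, x) ∉ Cl ∪ W) (ht : ∀ x ∈ [a, b, c, d], s(t, x) ∉ Cl ∪ W) :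
    WaiterWins (Kedges n) 1 (ClosePost Cl W w t [a, b, c, d]) 3 Cl W := by
  have hww : ∀ x ∈ [a, b, c, d], ∀ y ∈ [a, b, c, d], x ≠ y → s(w, x) ≠ s(w, y) := by
    intro x hx y hy hxy h; simp only [Sym2.eq_iff] at h; grind
  have htw : ∀ x ∈ [a, b, c, d], ∀ y ∈ [a, b, c, d], s(t, x) ≠ s(w, y) := by
    intro x hx y hy h
    simp only [List.nodup_cons, List.mem_cons, List.mem_singleton, not_or] at hnd hx hy
    simp only [Sym2.eq_iff] at h; grind
  have hU : ∀ (y z u v : Fin n) (e' : Sym2 (Fin n)),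
      e' ∈ insert s(w, u) (insert s(w, y) Cl) ∪ insert s(w, v) (insert s(w, z) W) ↔
      e' = s(w, y) ∨ e' = s(w, z) ∨ e' = s(w, u) ∨ e' = s(w, v) ∨ e' ∈ Cl ∪ W := by
    intro y z u v e'; simp only [Finset.mem_union, Finset.mem_insert]; tauto
  have hU1 : ∀ (y z : Fin n) (e' : Sym2 (Fin n)),
      e' ∈ (insert s(w, y) Cl) ∪ (insert s(w, z) W) ↔
      e' = s(w, y) ∨ e' = s(w, z) ∨ e' ∈ Cl ∪ W := by
    intro y z e'; simp only [Finset.mem_union, Finset.mem_insert]; tauto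
  have hnd' := hnd
  simp only [List.nodup_cons, List.mem_cons, List.not_mem_nil, not_or, or_false] at hnd
  obtain ⟨⟨hwt, hwa, hwb, hwc, hwd⟩, ⟨hta, htb, htc, htd⟩, ⟨hab, hac, had⟩, ⟨hbc, hbd⟩, hcd, -⟩ := hnd
  have key : ∀ y ∈ [a, b, c, d], ∀ z ∈ [a, b, c, d], ∀ u ∈ [a, b, c, d], ∀ v ∈ [a, b, c, d],
      y ≠ u → t ≠ y → t ≠ u →
      WaiterWins (Kedges n) 1 (ClosePost Cl W w t [a, b, c, d]) 1
        (insert s(w, u) (insert s(w, y) Cl)) (insert s(w, v) (insert s(w, z) W)) := by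
    intro y hy z hz u hu v hv hyu hty htu
    refine ww_mono ?_ _ _ _ (close0 _ _ w t y u hyu hty htu (by simp) (by simp) ?_ ?_)
    · rintro C' W' ⟨x, hx, h1, h2, h3, h4⟩
      refine ⟨x, ?_, h1, h2, ?_, ?_⟩
      · rcases hx with rfl | rfl <;> assumption
      · exact ((Finset.subset_insert _ _).trans (Finset.subset_insert _ _)).trans h3
      · intro e he
        rcases h4 e he with h | h | h
        · rw [hU] at h
          rcases h with h | h | h | h | h
          · exact Or.inr ⟨_, hy, Or.inl h⟩
          · exact Or.inr ⟨_, hz, Or.inl h⟩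
          · exact Or.inr ⟨_, hu, Or.inl h⟩
          · exact Or.inr ⟨_, hv, Or.inl h⟩
          · exact Or.inl h
        · exact Or.inr ⟨_, hy, Or.inr h⟩
        · exact Or.inr ⟨_, hu, Or.inr h⟩
    · rw [hU]
      rintro (h | h | h | h | h)
      · exact htw _ hy _ hy h
      · exact htw _ hy _ hz h
      · exact htw _ hy _ hu h
      · exact htw _ hy _ hv h
      · exact ht _ hy h
    · rw [hU]
      rintro (h | h | h | h | h)
      · exact htw _ hu _ hy h
      · exact htw _ hu _ hz h
      · exact htw _ hu _ hu h
      · exact htw _ hu _ hv h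
      · exact ht _ hu h
  have key2 : ∀ y ∈ [a, b, c, d], ∀ z ∈ [a, b, c, d], y ≠ c → y ≠ d → z ≠ c → z ≠ d → t ≠ y →
      WaiterWins (Kedges n) 1 (ClosePost Cl W w t [a, b, c, d]) 2
        (insert s(w, y) Cl) (insert s(w, z) W) := by
    intro y hy z hz hyc hyd hzc hzd hty
    have hc : c ∈ [a, b, c, d] := by simp
    have hd : d ∈ [a, b, c, d] := by simp
    refine ww_step (mem_Kedges hwc) (mem_Kedges hwd) (hww _ hc _ hd hcd) ?_ ?_
      (key y hy z hz c hc d hd hyc hty htc) (key y hy z hz d hd c hc hyd hty htd)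
    · rw [hU1]
      rintro (h | h | h)
      · exact hww _ hy _ hc hyc h.symm
      · exact hww _ hz _ hc hzc h.symm
      · exact hw _ hc h
    · rw [hU1]
      rintro (h | h | h)
      · exact hww _ hy _ hd hyd h.symm
      · exact hww _ hz _ hd hzd h.symm
      · exact hw _ hd h
  have ha : a ∈ [a, b, c, d] := by simp
  have hb : b ∈ [a, b, c, d] := by simp
  exact ww_step (mem_Kedges hwa) (mem_Kedges hwb) (hww _ ha _ hb hab) (hw _ ha) (hw _ hb)
    (key2 a ha b hb hac had hbc hbd hta) (key2 b hb a ha hbc hbd hac had htb)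

/-! ## The Hamilton cycle -/

def Good {n : ℕ} (w : Fin n) (P Q : List (Fin n)) (Cl W : Finset (Sym2 (Fin n))) : Prop :=
  (∀ e ∈ Cl ∪ W, ¬ e.IsDiag → (∀ x ∈ e, x ∈ w :: P) → e ∈ pathE (w :: P)) ∧
  (∀ e ∈ Cl ∪ W, ¬ e.IsDiag → (∀ x ∈ e, x ∈ P.getLastD w :: Q) → e ∈ pathE (P.getLastD w :: Q))

lemma getLastD_mem {V : Type*} (l : List V) (w : V) : l.getLastD w ∈ w :: l := by
  induction l generalizing w with
  | nil => simp
  | cons a l ih => rw [List.getLastD_cons]; exact List.mem_cons_of_mem _ (ih a)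

lemma getLastD_mem' {V : Type*} (l : List V) (w : V) (h : l ≠ []) : l.getLastD w ∈ l := by
  cases l with
  | nil => simp at h
  | cons a l => rw [List.getLastD_cons]; exact getLastD_mem l a

lemma Good.mono {n : ℕ} {w : Fin n} {P Q : List (Fin n)} {Cl W Cl' W' : Finset (Sym2 (Fin n))}
    (h : Good w P Q Cl W)
    (hnew : ∀ e ∈ Cl' ∪ W', e ∈ Cl ∪ W ∨ ∃ x ∈ e, x ∉ w :: (P ++ Q)) : Good w P Q Cl' W' := by
  constructor
  · intro e he hdg hx
    rcases hnew e he with h1 | ⟨x, h1, h2⟩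
    · exact h.1 e h1 hdg hx
    · exfalso; apply h2
      have := hx x h1
      simp only [List.mem_cons, List.mem_append] at this ⊢; tauto
  · intro e he hdg hx
    rcases hnew e he with h1 | ⟨x, h1, h2⟩
    · exact h.2 e h1 hdg hx
    · exfalso; apply h2
      have := hx x h1
      have h3 := getLastD_mem P w
      simp only [List.mem_cons, List.mem_append] at this h3 ⊢
      rcases this with rfl | this
      · tauto
      · tauto

lemma pathE_glue {V : Type*} (l : List V) (w : V) (q : List V) (S : Finset (Sym2 V))
    (h1 : ∀ e ∈ pathE (w :: l), e ∈ S) (h2 : ∀ e ∈ pathE (l.getLastD w :: q), e ∈ S) :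
    ∀ e ∈ pathE (w :: (l ++ q)), e ∈ S := by
  induction l generalizing w with
  | nil => simpa using h2
  | cons a l ih =>
    intro e he
    simp only [List.cons_append, pathE_cons_cons, List.mem_cons] at he h1
    rcases he with rfl | he
    · exact h1 _ (Or.inl rfl)
    · refine ih a (fun e he => h1 e (Or.inr he)) ?_ e he
      rwa [List.getLastD_cons] at h2

lemma getLastD_append {V : Type*} (l q : List V) (w : V) :
    (l ++ q).getLastD w = q.getLastD (l.getLastD w) := by
  induction l generalizing w with
  | nil => simp
  | cons a l ih => rw [List.cons_append, List.getLastD_cons, List.getLastD_cons, ih]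

/-- After building the two free segments. -/
def Post2 {n : ℕ} (g : ℕ) (w : Fin n) (U : Finset (Fin n)) (Cl W : Finset (Sym2 (Fin n))) : Prop :=
  ∃ P Q : List (Fin n), P.length = 31 * g ∧ Q.length = 11 * g ∧ (P ++ Q).Nodup ∧
    (∀ x ∈ P ++ Q, x ∈ U) ∧ (∀ e ∈ pathE (w :: (P ++ Q)), e ∈ Cl) ∧
    Good w P Q Cl W ∧ (∀ e ∈ Cl ∪ W, ∀ x ∈ e, x ∈ insert w U) ∧
    (∀ a b, (a = (P ++ Q).getLastD w ∨ (a ∈ U ∧ a ∉ P ++ Q)) →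
      (b = (P ++ Q).getLastD w ∨ (b ∈ U ∧ b ∉ P ++ Q)) → a ≠ b → s(a, b) ∉ Cl ∪ W)

lemma stage2 {n g : ℕ} (hg : 1 ≤ g) (w : Fin n) (U : Finset (Fin n)) (hw : w ∉ U)
    (hU : 62 * g ≤ U.card) :
    WaiterWins (Kedges n) 1 (Post2 g w U) (42 * g) ∅ ∅ := by
  have h1 := ext_lemma (31 * g) w U U ∅ ∅ hw le_rfl (by omega) (by simp)
  have := ww_comp (Q' := Post2 g w U) (t' := 11 * g) ?_ _ _ _ h1
  · exact ww_le (by omega) this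
  rintro C W ⟨P, p1, p2, p3, p4, p5, p6, p7⟩
  have hPne : P ≠ [] := by rintro rfl; simp at p1; omega
  have hlast : P.getLastD w ∈ P := getLastD_mem' _ _ hPne
  have hU1 : ∀ x, x ∈ U \ P.toFinset ↔ x ∈ U ∧ x ∉ P := by intro x; simp
  have hcard : (U \ P.toFinset).card = U.card - 31 * g := by
    rw [Finset.card_sdiff_of_subset, List.toFinset_card_of_nodup p2, p1]
    intro x hx; exact p3 x (List.mem_toFinset.1 hx)
  have h2 := ext_lemma (11 * g) (P.getLastD w) (U \ P.toFinset) (U \ P.toFinset) C W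
    (by rw [hU1]; tauto) le_rfl (by omega)
    (by
      intro a ha b hb hab
      rw [Finset.mem_insert, hU1] at ha hb
      exact p7 a b ha hb hab)
  refine ww_mono ?_ _ _ _ h2
  rintro C' W' ⟨Q, q1, q2, q3, q4, q5, q6, q7⟩
  have q3' : ∀ x ∈ Q, x ∈ U ∧ x ∉ P := fun x hx => (hU1 x).1 (q3 x hx)
  have p6' : ∀ e ∈ C ∪ W, (∀ x ∈ e, x ∈ insert w U) ∧
      (e ∈ pathE (w :: P) ∨ ∃ y ∈ e, y ∈ U ∧ y ∉ P) := by
    intro e he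
    rcases p6 e he with h | h
    · simp at h
    · exact ⟨h.1, h.2.2⟩
  refine ⟨P, Q, p1, q1, ?_, ?_, ?_, ⟨?_, ?_⟩, ?_, ?_⟩
  · rw [List.nodup_append']
    refine ⟨p2, q2, ?_⟩
    intro x hx hx'
    exact (q3' x hx').2 hx
  · intro x hx
    rcases List.mem_append.1 hx with hx | hx
    · exact p3 x hx
    · exact (q3' x hx).1
  · exact pathE_glue P w Q C' (fun e he => q5 (p4 e he)) q4
  · intro e he hdg hx
    rcases q6 e he with h | ⟨-, ⟨y, hy1, hy2⟩, -⟩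
    · rcases (p6' e h).2 with h | ⟨y, hy1, hy2, hy3⟩
      · exact h
      · exfalso
        rcases List.mem_cons.1 (hx y hy1) with rfl | h
        · exact hw hy2
        · exact hy3 h
    · exfalso
      rw [hU1] at hy2
      rcases List.mem_cons.1 (hx y hy1) with rfl | h
      · exact hw hy2.1
      · exact hy2.2 h
  · intro e he hdg hx
    have hne : e ∈ C ∪ W → False := by
      intro h
      induction e using Sym2.ind with
      | _ a b =>
      have ha : a = P.getLastD w ∨ (a ∈ U ∧ a ∉ P) := by
        rcases List.mem_cons.1 (hx a (by simp)) with h | h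
        · exact Or.inl h
        · exact Or.inr (q3' a h)
      have hb : b = P.getLastD w ∨ (b ∈ U ∧ b ∉ P) := by
        rcases List.mem_cons.1 (hx b (by simp)) with h | h
        · exact Or.inl h
        · exact Or.inr (q3' b h)
      exact p7 a b ha hb (by simpa using hdg) h
    rcases q6 e he with h | ⟨-, -, h⟩
    · exact (hne h).elim
    · rcases h with h | ⟨y, hy1, hy2, hy3⟩
      · exact h
      · exfalso
        rw [hU1] at hy2
        rcases List.mem_cons.1 (hx y hy1) with rfl | h
        · exact hy2.2 hlast
        · exact hy3 h
  · intro e he x hx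
    rcases q6 e he with h | ⟨h, -, -⟩
    · exact (p6' e h).1 x hx
    · have := h x hx
      rw [Finset.mem_insert, hU1] at this
      rw [Finset.mem_insert]
      rcases this with rfl | h
      · exact Or.inr (p3 _ hlast)
      · exact Or.inr h.1
  · intro a b ha hb hab
    rw [getLastD_append] at ha hb
    apply q7 a b _ _ hab
    · rw [hU1]; rw [List.mem_append] at ha; tauto
    · rw [hU1]; rw [List.mem_append] at hb; tauto

def Post3 {n : ℕ} (g : ℕ) (w : Fin n) (U : Finset (Fin n)) (Cl W : Finset (Sym2 (Fin n))) : Prop :=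
  ∃ (P Q R : List (Fin n)) (z : Fin n), P.length = 31 * g ∧ Q.length = 11 * g ∧
    R.length + 42 * g + 1 = U.card ∧ (P ++ Q ++ R).Nodup ∧ z ∉ P ++ Q ++ R ∧
    (∀ x, x ∈ U ↔ x = z ∨ x ∈ P ++ Q ++ R) ∧
    (∀ e ∈ pathE (w :: (P ++ Q ++ R)), e ∈ Cl) ∧
    Good w P Q Cl W ∧ (∀ e ∈ Cl ∪ W, ∀ x ∈ e, x ∈ insert w U)

lemma stage3 {n g : ℕ} (hg : 1 ≤ g) (w : Fin n) (U : Finset (Fin n)) (hw : w ∉ U)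
    (hU : 62 * g ≤ U.card) :
    WaiterWins (Kedges n) 1 (Post3 g w U) (U.card - 1) ∅ ∅ := by
  have := ww_comp (Q' := Post3 g w U) (t' := U.card - 42 * g - 1) ?_ _ _ _ (stage2 hg w U hw hU)
  · exact ww_le (by omega) this
  rintro C W ⟨P, Q, p1, q1, h1, h2, h3, h4, h5, h6⟩
  have hU1 : ∀ x, x ∈ U \ (P ++ Q).toFinset ↔ x ∈ U ∧ x ∉ P ++ Q := by intro x; simp
  have hcard : (U \ (P ++ Q).toFinset).card = U.card - 42 * g := by
    rw [Finset.card_sdiff_of_subset, List.toFinset_card_of_nodup h1, List.length_append, p1, q1]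
    · omega
    · intro x hx; exact h2 x (List.mem_toFinset.1 hx)
  have hlast : (P ++ Q).getLastD w ∈ P ++ Q := by
    apply getLastD_mem'
    intro h
    have := congrArg List.length h
    rw [List.length_append, p1, q1, List.length_nil] at this; omega
  refine ww_mono ?_ _ _ _ (rest_lemma (U.card - 42 * g - 1) ((P ++ Q).getLastD w)
    (U \ (P ++ Q).toFinset) C W (by rw [hU1]; tauto) (by omega) ?_)
  · rintro C' W' ⟨R, z, f1, f2, f3, f4, f5, f6, f7⟩
    have f4' : ∀ x, (x ∈ U ∧ x ∉ P ++ Q) ↔ x = z ∨ x ∈ R := fun x => by rw [← hU1]; exact f4 x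
    refine ⟨P, Q, R, z, p1, q1, by omega, ?_, ?_, ?_, ?_, ?_, ?_⟩
    · rw [List.nodup_append']
      exact ⟨h1, f2, fun x hx hx' => ((f4' x).2 (Or.inr hx')).2 hx⟩
    · have := ((f4' z).2 (Or.inl rfl)).2
      rw [List.mem_append]; tauto
    · intro x
      have := f4' x
      have h := h2 x
      rw [List.mem_append]; tauto
    · exact pathE_glue (P ++ Q) w R C' (fun e he => f6 (h3 e he)) f5
    · refine h4.mono ?_
      intro e he
      rcases f7 e he with h | ⟨-, x, hx1, hx2⟩
      · exact Or.inl h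
      · refine Or.inr ⟨x, hx1, ?_⟩
        rw [hU1] at hx2
        rw [List.mem_cons]
        rintro (rfl | h)
        · exact hw hx2.1
        · exact hx2.2 h
    · intro e he x hx
      rcases f7 e he with h | ⟨h, -⟩
      · exact h5 e h x hx
      · have := h x hx
        rw [Finset.mem_insert, hU1] at this
        rw [Finset.mem_insert]
        rcases this with rfl | h
        · exact Or.inr (h2 _ hlast)
        · exact Or.inr h.1
  · intro a ha b hb hab
    rw [Finset.mem_insert, hU1] at ha hb
    exact h6 a b ha hb hab

def HamPost {n : ℕ} (g : ℕ) (Cl W : Finset (Sym2 (Fin n))) : Prop :=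
  ∃ (w : Fin n) (P Q R : List (Fin n)) (y : Fin n), P.length = 31 * g ∧ Q.length = 11 * g ∧
    (w :: (P ++ Q ++ R ++ [y])).Nodup ∧ (w :: (P ++ Q ++ R ++ [y])).length = n ∧
    (∀ e ∈ pathE (w :: (P ++ Q ++ R ++ [y])), e ∈ Cl) ∧ s(w, y) ∈ Cl ∧ Good w P Q Cl W

lemma nodup_of_all {n : ℕ} (l : List (Fin n)) (hl : l.length = n) (h : ∀ x, x ∈ l) : l.Nodup := by
  have h1 : l.toFinset = Finset.univ := by ext x; simp [h x]
  have h2 : l.toFinset.card = l.length := by rw [h1, hl]; simp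
  have := (Multiset.toFinset_card_eq_card_iff_nodup (m := (l : Multiset (Fin n)))).1 (by simpa using h2)
  simpa using this

set_option maxHeartbeats 1000000 in
lemma stage4 {n g : ℕ} (hg : 1 ≤ g) (w a b c d : Fin n) (U F : Finset (Fin n))
    (hnd : [w, a, b, c, d].Nodup) (hU : ∀ x ∈ [w, a, b, c, d], x ∉ U)
    (hF : ∀ x ∈ [w, a, b, c, d], x ∉ F) (hUF : ∀ x ∈ U, x ∉ F)
    (hall : ∀ x, x ∈ [w, a, b, c, d] ∨ x ∈ U ∨ x ∈ F) (hFc : F.card = 12)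
    (hUc : U.card + 17 = n) (hUg : 42 * g + 56 ≤ U.card)
    (C W : Finset (Sym2 (Fin n))) (hpost : Post3 g w U C W) :
    WaiterWins (Kedges n) 1 (HamPost g) 29 C W := by
  obtain ⟨P, Q, R, z, p1, q1, r1, hnd1, hz, hmem, hpath, hgood, hin⟩ := hpost
  set X : List (Fin n) := [a, b, c, d] with hX
  have hXU : ∀ x ∈ X, x ∉ U := fun x hx => hU x (List.mem_cons_of_mem _ hx)
  have hXF : ∀ x ∈ X, x ∉ F := fun x hx => hF x (List.mem_cons_of_mem _ hx)
  have hwX : w ∉ X := (List.nodup_cons.1 hnd).1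
  have hXnd : X.Nodup := (List.nodup_cons.1 hnd).2
  have hwU : w ∉ U := hU w (by simp)
  have hwF : w ∉ F := hF w (by simp)
  -- split R
  obtain ⟨D, E, rfl, hD⟩ : ∃ D E, R = D ++ E ∧ D.length = 54 :=
    ⟨R.take 54, R.drop 54, by simp, by simp; omega⟩
  have hE : E ≠ [] := by rintro rfl; simp at r1; omega
  set L := P ++ Q ++ (D ++ E) with hL
  have hLU : ∀ x ∈ L, x ∈ U := fun x hx => (hmem x).2 (Or.inr hx)
  have hzU : z ∈ U := (hmem z).2 (Or.inl rfl)
  set t := L.getLastD w with ht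
  have htE : t ∈ E := by
    rw [ht, hL, ← List.append_assoc, getLastD_append]
    exact getLastD_mem' _ _ hE
  have htL : t ∈ L := by rw [hL]; simp [htE]
  have htU : t ∈ U := hLU t htL
  have hDL : ∀ x ∈ D, x ∈ L := fun x hx => by rw [hL]; simp [hx]
  have htD : t ∉ D := by
    intro h
    rw [hL, List.nodup_append'] at hnd1
    have := hnd1.2.1
    rw [List.nodup_append'] at this
    exact this.2.2 h htE
  have hPQD : ∀ x ∈ D, x ∉ P ++ Q := by
    intro x hx h
    rw [hL, List.nodup_append'] at hnd1
    exact hnd1.2.2 h (List.mem_append_left _ hx)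
  have hwL : ∀ x, x ∈ w :: (P ++ Q) → x ∈ insert w U := by
    intro x hx
    rw [List.mem_cons] at hx
    rw [Finset.mem_insert]
    rcases hx with h | h
    · exact Or.inl h
    · exact Or.inr (hLU x (by rw [hL]; exact List.mem_append_left _ h))
  have hzPQ : z ∉ w :: (P ++ Q) := by
    rw [List.mem_cons]
    rintro (rfl | h)
    · exact hwU hzU
    · exact hz (List.mem_append_left _ h)
  have hFPQ : ∀ x ∈ F, x ∉ w :: (P ++ Q) := by
    intro x hx h
    have := hwL x h
    rw [Finset.mem_insert] at this
    rcases this with rfl | h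
    · exact hwF hx
    · exact hUF x h hx
  have hXPQ : ∀ x ∈ X, x ∉ w :: (P ++ Q) := by
    intro x hx h
    have := hwL x h
    rw [Finset.mem_insert] at this
    rcases this with rfl | h
    · exact hwX hx
    · exact hXU x hx h
  -- build the block from F
  have s4 := ext_lemma 6 t F F C W (hUF t htU) le_rfl (by omega)
    (by
      intro u hu v hv huv hcl
      have h1 := hin _ hcl u (by simp)
      have h2 := hin _ hcl v (by simp)
      rw [Finset.mem_insert] at hu hv h1 h2
      have h3 : u ∈ F → False := by
        intro h; rcases h1 with rfl | h1
        · exact hwF h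
        · exact hUF u h1 h
      have h4 : v ∈ F → False := by
        intro h; rcases h2 with rfl | h2
        · exact hwF h
        · exact hUF v h2 h
      rcases hu with rfl | hu
      · rcases hv with rfl | hv
        · exact huv rfl
        · exact h4 hv
      · exact h3 hu)
  refine ww_comp (t := 6) (t' := 23) ?_ _ _ s4
  rintro C4 W4 ⟨B, b1, b2, b3, b4, b5, b6, -⟩
  have hB : B ≠ [] := by rintro rfl; simp at b1
  set t2 := B.getLastD t with ht2
  have ht2B : t2 ∈ B := getLastD_mem' _ _ hB
  have ht2F : t2 ∈ F := b3 _ ht2B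
  have b6' : ∀ e ∈ C4 ∪ W4, e ∈ C ∪ W ∨ ((∀ x ∈ e, x ∈ insert t F) ∧ ∃ x ∈ e, x ∈ F) := by
    intro e he
    rcases b6 e he with h | h
    · exact Or.inl h
    · exact Or.inr ⟨h.1, h.2.1⟩
  have hin4 : ∀ e ∈ C4 ∪ W4, ∀ x ∈ e, x ∉ X := by
    intro e he x hx hxX
    rcases b6' e he with h | ⟨h, -⟩
    · have := hin e h x hx
      rw [Finset.mem_insert] at this
      rcases this with rfl | h
      · exact hwX hxX
      · exact hXU x hxX h
    · have := h x hx
      rw [Finset.mem_insert] at this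
      rcases this with rfl | h
      · exact hXU _ hxX htU
      · exact hXF x hxX h
  -- close
  have s5 := close_lemma C4 W4 w t2 a b c d
    (by
      have : w :: t2 :: X = [w, t2, a, b, c, d] := rfl
      rw [← this, List.nodup_cons, List.nodup_cons, List.mem_cons, not_or]
      exact ⟨⟨fun h => hwF (h ▸ ht2F), hwX⟩, fun h => hXF _ h ht2F, hXnd⟩)
    (fun x hx hcl => hin4 _ hcl x (by simp) hx)
    (fun x hx hcl => hin4 _ hcl x (by simp) hx)
  refine ww_comp (t := 3) (t' := 20) ?_ _ _ s5
  rintro C5 W5 ⟨y, hyX, c1, c2, c3, c4⟩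
  change y ∈ X at hyX
  change ∀ e ∈ C5 ∪ W5, e ∈ C4 ∪ W4 ∨ ∃ y ∈ X, _ at c4
  -- absorb z
  have hpathB : ∀ e ∈ pathE (w :: (L ++ (B ++ [y]))), e ∈ C5 := by
    apply pathE_glue
    · intro e he; exact c3 (b5 (hpath e he))
    · have := pathE_glue B t [y] C5 (fun e he => c3 (b4 e he)) (by
        intro e he
        simp only [pathE_cons_cons, pathE_single, List.mem_singleton] at he
        rw [he]; exact c1)
      exact this
  have s6 := absorb_all [z] (w :: L) B [y] C5 W5 (by simp [b1])
    (by
      rw [List.singleton_append, List.nodup_cons]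
      exact ⟨fun h => hUF z hzU (b3 z h), b2⟩)
    (by
      intro x hx f hf hcl
      rw [List.mem_singleton] at hx
      subst hx
      have hfF := b3 f hf
      rcases c4 _ hcl with h | ⟨v, hv, h⟩
      · rcases b6' _ h with h | ⟨h, -⟩
        · have := hin _ h f (by simp)
          rw [Finset.mem_insert] at this
          rcases this with rfl | h
          · exact hwF hfF
          · exact hUF f h hfF
        · have := h x (by simp)
          rw [Finset.mem_insert] at this
          rcases this with rfl | h
          · exact hz htL
          · exact hUF x hzU h
      · have : v ∈ s(x, f) := by rcases h with h | h <;> rw [h] <;> simp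
        rw [Sym2.mem_iff] at this
        rcases this with rfl | rfl
        · exact hXU _ hv hzU
        · exact hXF _ hv hfF)
    (by simpa using hpathB)
  refine ww_comp (t := 2) (t' := 18) ?_ _ _ s6
  rintro C6 W6 ⟨B', d1, d2, d3, d4⟩
  -- absorb the remaining vertices
  set J := (F \ B.toFinset).toList with hJ
  have hJm : ∀ x, x ∈ J ↔ x ∈ F ∧ x ∉ B := by intro x; simp [hJ]
  have hJl : J.length = 6 := by
    rw [hJ, Finset.length_toList, Finset.card_sdiff_of_subset, List.toFinset_card_of_nodup b2, hFc, b1]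
    intro x hx; exact b3 x (List.mem_toFinset.1 hx)
  set ys := X.erase y with hys
  have hysX : ∀ x ∈ ys, x ∈ X := fun x hx => List.mem_of_mem_erase hx
  have hysl : ys.length = 3 := by rw [hys, List.length_erase_of_mem hyX]; rfl
  have hJys : ∀ x ∈ J ++ ys, x ∉ insert w U := by
    intro x hx h
    rw [Finset.mem_insert] at h
    rcases List.mem_append.1 hx with hx | hx
    · have := ((hJm x).1 hx).1
      rcases h with rfl | h
      · exact hwF this
      · exact hUF x h this
    · have := hysX x hx
      rcases h with rfl | h
      · exact hwX this
      · exact hXU x this h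
  have s7 := absorb_all (J ++ ys) (w :: (P ++ Q)) D (E ++ B' ++ [y]) C6 W6
    (by rw [List.length_append, hJl, hysl, hD])
    (by
      rw [List.nodup_append', List.nodup_append']
      refine ⟨⟨Finset.nodup_toList _, hXnd.erase _, ?_⟩, ?_, ?_⟩
      · intro x hx hx'
        exact hXF x (hysX x hx') ((hJm x).1 hx).1
      · rw [hL, List.nodup_append'] at hnd1
        have := hnd1.2.1
        rw [List.nodup_append'] at this
        exact this.1
      · intro x hx hx'
        exact hJys x hx (by rw [Finset.mem_insert]; exact Or.inr (hLU x (hDL x hx'))))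
    (by
      intro x hx f hf hcl
      have hfU := hLU f (hDL f hf)
      have hxn := hJys x hx
      rcases d4 _ hcl with h | ⟨z', hz', f', hf', h⟩
      · rcases c4 _ h with h | ⟨v, hv, h⟩
        · rcases b6' _ h with h | ⟨h, -⟩
          · exact hxn (hin _ h x (by simp))
          · have := h f (by simp)
            rw [Finset.mem_insert] at this
            rcases this with rfl | h
            · exact htD hf
            · exact hUF f hfU h
        · have : f ∈ s(w, v) ∨ f ∈ s(t2, v) := by
            rcases h with h | h
            · left; rw [← h]; simp
            · right; rw [← h]; simp
          simp only [Sym2.mem_iff] at this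
          rcases this with (rfl | rfl) | (rfl | rfl)
          · exact hwU hfU
          · exact hXU _ hv hfU
          · exact hUF _ hfU ht2F
          · exact hXU _ hv hfU
      · rw [List.mem_singleton] at hz'
        subst hz'
        have : f ∈ s(z', f') := by rw [← h]; simp
        rw [Sym2.mem_iff] at this
        rcases this with rfl | rfl
        · exact hz (hDL _ hf)
        · exact hUF _ hfU (b3 _ hf'))
    (by
      have : w :: (P ++ Q) ++ D ++ (E ++ B' ++ [y]) = w :: L ++ B' ++ [y] := by
        rw [hL]; simp
      rw [this]; exact d2)
  refine ww_le (t := 18) le_rfl ?_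
  have s7' : WaiterWins (Kedges n) 1 (AbsPost C6 W6 (J ++ ys) (w :: (P ++ Q)) D (E ++ B' ++ [y]))
      18 C6 W6 := by
    have : 2 * (J ++ ys).length = 18 := by rw [List.length_append, hJl, hysl]
    rw [this] at s7; exact s7
  refine ww_mono ?_ _ _ _ s7'
  rintro C7 W7 ⟨D', e1, e2, e3, e4⟩
  have hlist : w :: (P ++ Q ++ (D' ++ E ++ B') ++ [y])
      = w :: (P ++ Q) ++ D' ++ (E ++ B' ++ [y]) := by simp
  have hlen : (w :: (P ++ Q ++ (D' ++ E ++ B') ++ [y])).length = n := by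
    have h1 := d1.length_eq
    have h2 := e1.length_eq
    simp only [List.length_append, List.length_cons, List.length_nil] at h1 h2 r1 ⊢
    omega
  have hsub : C4 ⊆ C7 := c3.trans (d3.trans e3)
  refine ⟨w, P, Q, D' ++ E ++ B', y, p1, q1, ?_, hlen, ?_, e3 (d3 c2), ?_⟩
  · apply nodup_of_all _ hlen
    intro x
    have h1 : x ∈ D' ↔ x ∈ J ++ ys ++ D := e1.mem_iff
    have h2 : x ∈ B' ↔ x ∈ [z] ++ B := d1.mem_iff
    have h3 := hJm x
    have h4 : x ∈ X → x = y ∨ x ∈ ys := by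
      intro h
      by_cases hxy : x = y
      · exact Or.inl hxy
      · exact Or.inr ((List.mem_erase_of_ne hxy).2 h)
    have h5 := hmem x
    have h6 : x ∈ [w, a, b, c, d] ↔ x = w ∨ x ∈ X := List.mem_cons
    have h7 := hall x
    rw [h6] at h7
    rw [hL] at h5
    simp only [List.mem_cons, List.mem_append, List.not_mem_nil, or_false] at h1 h2 h5 ⊢
    clear_value X J ys t t2 L
    clear * - h1 h2 h3 h4 h5 h7
    grind
  · rw [hlist]; exact e2
  · refine hgood.mono ?_
    intro e he
    rcases e4 e he with h | ⟨x, hx, f, hf, rfl⟩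
    · rcases d4 e h with h | ⟨x, hx, f, hf, rfl⟩
      · rcases c4 e h with h | ⟨x, hx, h⟩
        · rcases b6' e h with h | ⟨-, x, hx, hxF⟩
          · exact Or.inl h
          · exact Or.inr ⟨x, hx, hFPQ x hxF⟩
        · refine Or.inr ⟨x, ?_, hXPQ x hx⟩
          rcases h with rfl | rfl <;> simp
      · rw [List.mem_singleton] at hx
        subst hx
        exact Or.inr ⟨x, by simp, hzPQ⟩
    · refine Or.inr ⟨x, by simp, fun h => hJys x hx (hwL x h)⟩

lemma ham_lemma {n g : ℕ} (hg : 10 ≤ g) (hn : 64 * g ≤ n) :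
    WaiterWins (Kedges n) 1 (HamPost (n := n) g) (n + 11) ∅ ∅ := by
  have hlen : (List.finRange n).length = n := List.length_finRange
  have hnd : (List.finRange n).Nodup := List.nodup_finRange n
  have hall : ∀ x, x ∈ List.finRange n := List.mem_finRange
  obtain ⟨w, a, b, c, d, l, hl⟩ : ∃ w a b c d l, List.finRange n = w :: a :: b :: c :: d :: l := by
    generalize List.finRange n = L at *
    match L, hlen with
    | w :: a :: b :: c :: d :: l, _ => exact ⟨w, a, b, c, d, l, rfl⟩
    | [], h | [_], h | [_, _], h | [_, _, _], h | [_, _, _, _], h => simp at h; omega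
  obtain ⟨l1, l2, rfl, hl1⟩ : ∃ l1 l2, l = l1 ++ l2 ∧ l1.length = 12 := by
    refine ⟨l.take 12, l.drop 12, by simp, ?_⟩
    rw [hl] at hlen
    simp at hlen ⊢; omega
  rw [hl] at hnd hall hlen
  have hcons : w :: a :: b :: c :: d :: (l1 ++ l2) = [w, a, b, c, d] ++ (l1 ++ l2) := rfl
  rw [hcons] at hnd hall hlen
  rw [List.nodup_append', List.nodup_append'] at hnd
  obtain ⟨n1, ⟨n2, n3, n4⟩, n5⟩ := hnd
  have hUc : (l2.toFinset).card = l2.length := List.toFinset_card_of_nodup n3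
  have hFc : (l1.toFinset).card = l1.length := List.toFinset_card_of_nodup n2
  have hl2 : l2.length + 17 = n := by
    simp only [List.length_append, List.length_cons, List.length_nil] at hlen; omega
  have h3 := stage3 (g := g) (by omega) w l2.toFinset
    (by rw [List.mem_toFinset]; exact fun h => n5 (by simp) (List.mem_append_right _ h)) (by omega)
  have := ww_comp (fun C W h => stage4 (g := g) (by omega) w a b c d l2.toFinset l1.toFinset n1
    (by intro x hx; rw [List.mem_toFinset]; exact fun h => n5 hx (List.mem_append_right _ h))
    (by intro x hx; rw [List.mem_toFinset]; exact fun h => n5 hx (List.mem_append_left _ h))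
    (by intro x hx; rw [List.mem_toFinset] at hx ⊢; exact fun h => n4 h hx)
    (by
      intro x
      have := hall x
      rw [List.mem_append, List.mem_append] at this
      rw [List.mem_toFinset, List.mem_toFinset]; tauto)
    (by omega) (by omega) (by omega) C W h) _ _ _ h3
  exact ww_le (by omega) this

-- ===== chord phase =====
lemma tasks_lemma {X ι : Type*} [DecidableEq X] [DecidableEq ι] {board : Finset X}
    (e f : ι → X) (I : Finset ι) : ∀ (C W : Finset X),
    (∀ i ∈ I, e i ∈ board ∧ f i ∈ board ∧ e i ≠ f i ∧ e i ∉ C ∪ W ∧ f i ∉ C ∪ W) →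
    (∀ i ∈ I, ∀ j ∈ I, i ≠ j → e i ≠ e j ∧ e i ≠ f j ∧ f i ≠ e j ∧ f i ≠ f j) →
    WaiterWins board 1 (fun C' _ => C ⊆ C' ∧ ∀ i ∈ I, e i ∈ C' ∨ f i ∈ C') I.card C W := by
  induction I using Finset.induction_on with
  | empty =>
    intro C W _ _
    exact ww_of_win _ _ _ ⟨subset_rfl, by simp⟩
  | insert a I ha ih =>
    intro C W h1 h2
    rw [Finset.card_insert_of_notMem ha]
    obtain ⟨k1, k2, k3, k4, k5⟩ := h1 a (Finset.mem_insert_self _ _)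
    refine ww_step k1 k2 k3 k4 k5 ?_ ?_
    · refine ww_mono ?_ _ _ _ (ih (insert (e a) C) (insert (f a) W) ?_ ?_)
      · rintro C' W' ⟨m1, m2⟩
        refine ⟨(Finset.subset_insert _ _).trans m1, ?_⟩
        intro i hi
        rcases Finset.mem_insert.1 hi with rfl | hi
        · exact Or.inl (m1 (Finset.mem_insert_self _ _))
        · exact m2 i hi
      · intro i hi
        obtain ⟨l1, l2, l3, l4, l5⟩ := h1 i (Finset.mem_insert_of_mem hi)
        have hne : i ≠ a := fun h => ha (h ▸ hi)
        obtain ⟨q1, q2, q3, q4⟩ := h2 i (Finset.mem_insert_of_mem hi) a (Finset.mem_insert_self _ _) hne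
        simp only [Finset.mem_union, Finset.mem_insert, not_or] at l4 l5 ⊢
        exact ⟨l1, l2, l3, ⟨⟨q1, l4.1⟩, q2, l4.2⟩, ⟨q3, l5.1⟩, q4, l5.2⟩
      · intro i hi j hj
        exact h2 i (Finset.mem_insert_of_mem hi) j (Finset.mem_insert_of_mem hj)
    · refine ww_mono ?_ _ _ _ (ih (insert (f a) C) (insert (e a) W) ?_ ?_)
      · rintro C' W' ⟨m1, m2⟩
        refine ⟨(Finset.subset_insert _ _).trans m1, ?_⟩
        intro i hi
        rcases Finset.mem_insert.1 hi with rfl | hi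
        · exact Or.inr (m1 (Finset.mem_insert_self _ _))
        · exact m2 i hi
      · intro i hi
        obtain ⟨l1, l2, l3, l4, l5⟩ := h1 i (Finset.mem_insert_of_mem hi)
        have hne : i ≠ a := fun h => ha (h ▸ hi)
        obtain ⟨q1, q2, q3, q4⟩ := h2 i (Finset.mem_insert_of_mem hi) a (Finset.mem_insert_self _ _) hne
        simp only [Finset.mem_union, Finset.mem_insert, not_or] at l4 l5 ⊢
        exact ⟨l1, l2, l3, ⟨⟨q2, l4.1⟩, q1, l4.2⟩, ⟨q4, l5.1⟩, q3, l5.2⟩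
      · intro i hi j hj
        exact h2 i (Finset.mem_insert_of_mem hi) j (Finset.mem_insert_of_mem hj)

lemma chord_tasks {n : ℕ} (c : ℕ → Fin n) (hinj : ∀ i j, i < n → j < n → c i = c j → i = j)
    (I : Finset (ℕ × ℕ)) (C W : Finset (Sym2 (Fin n)))
    (h1 : ∀ p ∈ I, p.1 + 2 ≤ p.2 ∧ p.2 + 1 < n ∧ s(c p.1, c p.2) ∉ C ∪ W ∧
      s(c (p.1+1), c (p.2+1)) ∉ C ∪ W)
    (h2 : ∀ p ∈ I, ∀ q ∈ I, p.1 + 1 ≠ q.1) :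
    WaiterWins (Kedges n) 1 (fun C' _ => C ⊆ C' ∧ ∀ p ∈ I, s(c p.1, c p.2) ∈ C' ∨
      s(c (p.1+1), c (p.2+1)) ∈ C') I.card C W := by
  have key : ∀ a b a' b', a < b → a' < b' → b < n → b' < n → s(c a, c b) = s(c a', c b') →
      a = a' ∧ b = b' := by
    intro a b a' b' ha ha' hb hb' h
    rw [Sym2.eq_iff] at h
    rcases h with ⟨x, y⟩ | ⟨x, y⟩
    · exact ⟨hinj _ _ (by omega) (by omega) x, hinj _ _ (by omega) (by omega) y⟩
    · have := hinj _ _ (by omega) (by omega) x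
      have := hinj _ _ (by omega) (by omega) y
      omega
  apply tasks_lemma (fun p : ℕ × ℕ => s(c p.1, c p.2)) (fun p : ℕ × ℕ => s(c (p.1+1), c (p.2+1))) I C W
  · intro p hp
    obtain ⟨x1, x2, x3, x4⟩ := h1 p hp
    refine ⟨?_, ?_, ?_, x3, x4⟩
    · apply mem_Kedges; intro h
      have := hinj _ _ (by omega) (by omega) h; omega
    · apply mem_Kedges; intro h
      have := hinj _ _ (by omega) (by omega) h; omega
    · intro h
      have := key _ _ _ _ (by omega) (by omega) (by omega) (by omega) h
      omega
  · intro p hp q hq hpq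
    obtain ⟨x1, x2, x3, x4⟩ := h1 p hp
    obtain ⟨y1, y2, y3, y4⟩ := h1 q hq
    have z1 := h2 p hp q hq
    have z2 := h2 q hq p hp
    refine ⟨?_, ?_, ?_, ?_⟩ <;> intro h <;>
      have h' := key _ _ _ _ (by omega) (by omega) (by omega) (by omega) h
    · exact hpq (Prod.ext h'.1 h'.2)
    · omega
    · omega
    · exact hpq (Prod.ext (by omega) (by omega))

def Pth {n : ℕ} (c : ℕ → Fin n) (C : Finset (Sym2 (Fin n))) (a b l : ℕ) : Prop :=
  ∃ p : (⊤ : SimpleGraph (Fin n)).Walk (c a) (c b), p.IsPath ∧ p.length = l ∧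
    (∀ e ∈ p.edges, e ∈ C) ∧ ∀ x ∈ p.support, ∃ i, a ≤ i ∧ i ≤ b ∧ x = c i

lemma pth_nil {n : ℕ} (c : ℕ → Fin n) (C : Finset (Sym2 (Fin n))) (b : ℕ) : Pth c C b b 0 :=
  ⟨SimpleGraph.Walk.nil, SimpleGraph.Walk.IsPath.nil, rfl, by simp, fun x hx => ⟨b, le_rfl, le_rfl, by simpa using hx⟩⟩

lemma pth_cons {n : ℕ} {c : ℕ → Fin n} (hinj : ∀ i j, i < n → j < n → c i = c j → i = j)
    {C : Finset (Sym2 (Fin n))} {a a' b l : ℕ} (h1 : a < a') (h2 : a' ≤ b) (h3 : b < n)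
    (h4 : s(c a, c a') ∈ C) (h : Pth c C a' b l) : Pth c C a b (l+1) := by
  obtain ⟨p, p1, p2, p3, p4⟩ := h
  have hadj : (⊤ : SimpleGraph (Fin n)).Adj (c a) (c a') := by
    rw [SimpleGraph.top_adj]; intro h
    have := hinj _ _ (by omega) (by omega) h; omega
  refine ⟨SimpleGraph.Walk.cons hadj p, ?_, ?_, ?_, ?_⟩
  · rw [SimpleGraph.Walk.cons_isPath_iff]
    refine ⟨p1, fun h => ?_⟩
    obtain ⟨i, i1, i2, i3⟩ := p4 _ h
    have := hinj _ _ (by omega) (by omega) i3; omega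
  · rw [SimpleGraph.Walk.length_cons, p2]
  · intro e he
    rw [SimpleGraph.Walk.edges_cons, List.mem_cons] at he
    rcases he with rfl | he
    · exact h4
    · exact p3 e he
  · intro x hx
    rw [SimpleGraph.Walk.support_cons, List.mem_cons] at hx
    rcases hx with rfl | hx
    · exact ⟨a, le_rfl, by omega, rfl⟩
    · obtain ⟨i, i1, i2, i3⟩ := p4 _ hx
      exact ⟨i, by omega, i2, i3⟩

lemma pth_run {n : ℕ} {c : ℕ → Fin n} (hinj : ∀ i j, i < n → j < n → c i = c j → i = j)
    {C : Finset (Sym2 (Fin n))} (hC : ∀ i, i + 1 < n → s(c i, c (i+1)) ∈ C) {b : ℕ} (h3 : b < n) (k : ℕ) :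
    ∀ {a l : ℕ}, a + k ≤ b → Pth c C (a + k) b l → Pth c C a b (l + k) := by
  induction k with
  | zero => intro a l _ h; exact h
  | succ k ih =>
    intro a l h1 h
    have := ih (a := a + 1) (l := l) (by omega) (by rwa [show a + 1 + k = a + (k+1) by omega])
    exact pth_cons hinj (by omega) (by omega) h3 (hC a (by omega)) this

lemma pth_run' {n : ℕ} {c : ℕ → Fin n} (hinj : ∀ i j, i < n → j < n → c i = c j → i = j)
    {C : Finset (Sym2 (Fin n))} (hC : ∀ i, i + 1 < n → s(c i, c (i+1)) ∈ C) {a a' b l l' : ℕ} (h3 : b < n)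
    (h1 : a ≤ a') (h2 : a' ≤ b) (hl : l' + a = l + a') (h : Pth c C a' b l) : Pth c C a b l' := by
  obtain ⟨k, rfl⟩ := Nat.exists_eq_add_of_le h1
  have := pth_run hinj hC h3 k h2 h
  rwa [show l + k = l' by omega] at this

lemma chord_path {n : ℕ} {c : ℕ → Fin n} (hinj : ∀ i j, i < n → j < n → c i = c j → i = j)
    {C : Finset (Sym2 (Fin n))} (hC : ∀ i, i + 1 < n → s(c i, c (i+1)) ∈ C)
    (s ℓ T : ℕ → ℕ) (K : ℕ) (hT0 : T 0 = 0) (hT : ∀ i, T (i+1) = T i + s i)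
    (hs : ∀ i < K, s i ≤ T i + 1) (hℓ : ∀ i < K, ℓ i + s i + 2 ≤ ℓ (i+1))
    (hch : ∀ i < K, s(c (ℓ i), c (ℓ i + s i + 1)) ∈ C ∨ s(c (ℓ i + 1), c (ℓ i + s i + 1 + 1)) ∈ C)
    {d : ℕ} (hd : d < n) : ∀ j ≤ K, ℓ j ≤ d → ∀ l, Pth c C (ℓ j) d l →
      ∀ N ≤ T j, ∃ l', l' + N + ℓ 0 = l + ℓ j ∧ Pth c C (ℓ 0) d l' := by
  intro j
  induction j with
  | zero =>
    intro _ _ l h N hN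
    exact ⟨l, by omega, h⟩
  | succ j ih =>
    intro hj hjd l h N hN
    have g1 := hℓ j (by omega)
    have g2 := hs j (by omega)
    have g3 := hT j
    by_cases hN' : N ≤ T j
    · obtain ⟨l', e1, e2⟩ := ih (by omega) (by omega) (l + (ℓ (j+1) - ℓ j))
        (pth_run' hinj hC hd (by omega) hjd (by omega) h) N hN'
      exact ⟨l', by omega, e2⟩
    · have hp : Pth c C (ℓ j) d (l + (ℓ (j+1) - ℓ j) - s j) := by
        rcases hch j (by omega) with h' | h'
        · have := pth_cons hinj (by omega) (by omega) hd h'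
            (pth_run' hinj hC (l' := l + (ℓ (j+1) - (ℓ j + s j + 1))) hd (by omega) hjd (by omega) h)
          rwa [show l + (ℓ (j+1) - (ℓ j + s j + 1)) + 1 = l + (ℓ (j+1) - ℓ j) - s j by omega] at this
        · have := pth_cons hinj (by omega) (by omega) hd (hC (ℓ j) (by omega)) (pth_cons hinj (by omega) (by omega) hd h'
            (pth_run' hinj hC (l' := l + (ℓ (j+1) - (ℓ j + s j + 2))) hd (by omega) hjd (by omega) h))
          rwa [show l + (ℓ (j+1) - (ℓ j + s j + 2)) + 1 + 1 = l + (ℓ (j+1) - ℓ j) - s j by omega] at this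
      obtain ⟨l', e1, e2⟩ := ih (by omega) (by omega) _ hp (N - s j) (by omega)
      exact ⟨l', by omega, e2⟩

lemma path_notMem_edge {V : Type*} {G : SimpleGraph V} {u v : V} (p : G.Walk u v) (hp : p.IsPath)
    (hl : 2 ≤ p.length) : s(u, v) ∉ p.edges := by
  cases p with
  | nil => simp at hl
  | @cons _ w _ h q =>
    rw [SimpleGraph.Walk.cons_isPath_iff] at hp
    rw [SimpleGraph.Walk.edges_cons, List.mem_cons]
    rintro (h1 | h1)
    · have : v = w := by
        rw [Sym2.congr_right] at h1; exact h1
      subst this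
      have := SimpleGraph.Walk.isPath_iff_nil.1 hp.1
      have := SimpleGraph.Walk.nil_iff_length_eq.1 this
      rw [SimpleGraph.Walk.length_cons] at hl
      omega
    · exact hp.2 (SimpleGraph.Walk.fst_mem_support_of_mem_edges _ h1)

lemma chord_cycle {n : ℕ} {c : ℕ → Fin n} (hinj : ∀ i j, i < n → j < n → c i = c j → i = j)
    {C : Finset (Sym2 (Fin n))} (hC : ∀ i, i + 1 < n → s(c i, c (i+1)) ∈ C)
    (s ℓ T : ℕ → ℕ) (K : ℕ) (hT0 : T 0 = 0) (hT : ∀ i, T (i+1) = T i + s i)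
    (hs : ∀ i < K, s i ≤ T i + 1) (hℓ : ∀ i < K, ℓ i + s i + 2 ≤ ℓ (i+1))
    (hch : ∀ i < K, s(c (ℓ i), c (ℓ i + s i + 1)) ∈ C ∨ s(c (ℓ i + 1), c (ℓ i + s i + 1 + 1)) ∈ C)
    {a b j N L : ℕ} (hb : b < n) (hj : j ≤ K) (ha : a ≤ ℓ 0) (hjb : ℓ j ≤ b) (h0j : ℓ 0 ≤ ℓ j)
    (hab : s(c a, c b) ∈ C) (hN : N ≤ T j) (hL : L + N + a = b + 1) (hL3 : 3 ≤ L) :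
    ∃ (u : Fin n) (p : (⊤ : SimpleGraph (Fin n)).Walk u u),
      p.IsCycle ∧ p.length = L ∧ ∀ e ∈ p.edges, e ∈ C := by
  obtain ⟨l', e1, e2⟩ := chord_path hinj hC s ℓ T K hT0 hT hs hℓ hch hb j hj hjb (b - ℓ j)
    (pth_run' hinj hC hb hjb le_rfl (by omega) (pth_nil c C b)) N hN
  have : Pth c C a b (L - 1) := pth_run' hinj hC hb ha (by omega) (by omega) e2
  obtain ⟨p, p1, p2, p3, p4⟩ := this
  have hadj : (⊤ : SimpleGraph (Fin n)).Adj (c b) (c a) := by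
    rw [SimpleGraph.top_adj]; intro h
    have := hinj _ _ (by omega) (by omega) h; omega
  refine ⟨c b, SimpleGraph.Walk.cons hadj p, ?_, ?_, ?_⟩
  · rw [SimpleGraph.Walk.cons_isCycle_iff]
    refine ⟨p1, ?_⟩
    rw [Sym2.eq_swap]
    exact path_notMem_edge p p1 (by omega)
  · rw [SimpleGraph.Walk.length_cons, p2]; omega
  · intro e he
    rw [SimpleGraph.Walk.edges_cons, List.mem_cons] at he
    rcases he with rfl | he
    · rwa [Sym2.eq_swap]
    · exact p3 e he

-- ===== conversion to an indexed cycle =====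
lemma mem_pathE_iff {V : Type*} (d : V) (l : List V) (e : Sym2 V) :
    e ∈ pathE l ↔ ∃ i, i + 1 < l.length ∧ e = s(l.getD i d, l.getD (i+1) d) := by
  induction l with
  | nil => simp
  | cons a l ih =>
    cases l with
    | nil => simp
    | cons b l =>
      rw [pathE_cons_cons, List.mem_cons, ih]
      constructor
      · rintro (rfl | ⟨i, hi, rfl⟩)
        · exact ⟨0, by simp, rfl⟩
        · exact ⟨i+1, by simpa using hi, rfl⟩
      · rintro ⟨i, hi, rfl⟩
        cases i with
        | zero => exact Or.inl rfl
        | succ i => exact Or.inr ⟨i, by simpa using hi, rfl⟩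

lemma cons_eq_snoc {V : Type*} (w : V) (P : List V) : ∃ M, w :: P = M ++ [P.getLastD w] := by
  induction P generalizing w with
  | nil => exact ⟨[], rfl⟩
  | cons a P ih =>
    obtain ⟨M, hM⟩ := ih a
    exact ⟨w :: M, by rw [List.getLastD_cons, hM]; rfl⟩

def CycPost {n : ℕ} (g : ℕ) (c : ℕ → Fin n) (C W : Finset (Sym2 (Fin n))) : Prop :=
  (∀ i j, i < n → j < n → c i = c j → i = j) ∧ (∀ i, i + 1 < n → s(c i, c (i+1)) ∈ C) ∧
  s(c 0, c (n-1)) ∈ C ∧ (∀ i j, i + 2 ≤ j → j ≤ 31 * g → s(c i, c j) ∉ C ∪ W) ∧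
  (∀ i j, 31 * g ≤ i → i + 2 ≤ j → j ≤ 42 * g → s(c i, c j) ∉ C ∪ W)

lemma sub_free {n : ℕ} (c : ℕ → Fin n) (hinj : ∀ i j, i < n → j < n → c i = c j → i = j)
    (m : List (Fin n)) (w : Fin n) (o : ℕ) (hm : ∀ i < m.length, m.getD i w = c (o + i))
    (hlen : o + m.length ≤ n) (E : Finset (Sym2 (Fin n)))
    (hE : ∀ e ∈ E, ¬ e.IsDiag → (∀ x ∈ e, x ∈ m) → e ∈ pathE m) (i j : ℕ) (hi : o ≤ i)
    (hij : i + 2 ≤ j) (hj : j < o + m.length) : s(c i, c j) ∉ E := by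
  intro h
  have hmem : ∀ k, o ≤ k → k < o + m.length → c k ∈ m := by
    intro k h1 h2
    have := hm (k - o) (by omega)
    rw [show o + (k - o) = k by omega] at this
    rw [← this, List.getD_eq_getElem _ _ (by omega)]
    exact List.getElem_mem _
  have := hE _ h (by
    rw [Sym2.mk_isDiag_iff]; intro h
    have := hinj _ _ (by omega) (by omega) h; omega) (by
    intro x hx
    rw [Sym2.mem_iff] at hx
    rcases hx with rfl | rfl
    · exact hmem _ (by omega) (by omega)
    · exact hmem _ (by omega) (by omega))
  rw [mem_pathE_iff w] at this
  obtain ⟨k, k1, k2⟩ := this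
  rw [hm _ (by omega), hm _ (by omega), Sym2.eq_iff] at k2
  rcases k2 with ⟨x, y⟩ | ⟨x, y⟩ <;>
  · have := hinj _ _ (by omega) (by omega) x
    have := hinj _ _ (by omega) (by omega) y
    omega

lemma cyc_of_ham {n g : ℕ} {C W : Finset (Sym2 (Fin n))} (h : HamPost g C W) :
    ∃ c, CycPost g c C W := by
  obtain ⟨w, P, Q, R, y, p1, q1, hnd, hlen, hpath, hwy, h1, h2⟩ := h
  set l := w :: (P ++ Q ++ R ++ [y]) with hl
  have hinj : ∀ i j, i < n → j < n → l.getD i w = l.getD j w → i = j := by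
    intro i j hi hj h
    rw [List.getD_eq_getElem _ _ (by omega), List.getD_eq_getElem _ _ (by omega)] at h
    exact (hnd.getElem_inj_iff).1 h
  have hn : l.length = n := hlen
  have hnn : 42 * g + R.length + 2 = n := by
    have := hn
    rw [hl] at this
    simp only [List.length_append, List.length_cons, List.length_nil, p1, q1] at this; omega
  refine ⟨fun i => l.getD i w, hinj, ?_, ?_, ?_, ?_⟩
  · intro i hi
    exact hpath _ ((mem_pathE_iff w _ _).2 ⟨i, by omega, rfl⟩)
  · have e1 : l.getD 0 w = w := rfl
    have e2 : l.getD (n-1) w = y := by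
      have : l = (w :: (P ++ Q ++ R)) ++ [y] := rfl
      rw [this, List.getD_append_right _ _ _ _ (by
        simp only [List.length_append, List.length_cons, p1, q1]; omega)]
      rw [show n - 1 - (w :: (P ++ Q ++ R)).length = 0 by
        simp only [List.length_append, List.length_cons, p1, q1]; omega]
      rfl
    change s(l.getD 0 w, l.getD (n-1) w) ∈ C
    rw [e1, e2]; exact hwy
  · intro i j hij hj
    refine sub_free (fun i => l.getD i w) hinj (w :: P) w 0 ?_ ?_ (C ∪ W) h1 i j (by omega) hij ?_
    · intro i hi
      have : l = (w :: P) ++ (Q ++ R ++ [y]) := by rw [hl]; simp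
      change _ = l.getD (0 + i) w
      rw [this, Nat.zero_add, List.getD_append _ _ _ _ hi]
    · rw [List.length_cons, p1]; omega
    · rw [List.length_cons, p1]; omega
  · intro i j hi hij hj
    obtain ⟨M, hM⟩ := cons_eq_snoc w P
    have hMl : M.length = 31 * g := by
      have := congrArg List.length hM
      rw [List.length_append, List.length_cons, p1] at this
      simpa using this.symm
    refine sub_free (fun i => l.getD i w) hinj (P.getLastD w :: Q) w (31 * g) ?_ ?_ (C ∪ W) h2 i j (by omega) hij ?_
    · intro i hi
      have : l = M ++ ((P.getLastD w :: Q) ++ (R ++ [y])) := by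
        have : l = (w :: P) ++ (Q ++ (R ++ [y])) := by rw [hl]; simp
        rw [this, hM]; simp
      change _ = l.getD (31 * g + i) w
      rw [this, List.getD_append_right _ _ _ _ (by omega), hMl, List.getD_append _ _ _ _ (by omega)]
      congr 1; omega
    · rw [List.length_cons, q1]; omega
    · rw [List.length_cons, q1]; omega

-- ===== parameters =====
def sP (g k i : ℕ) : ℕ := if i < k then 2 ^ i else g

def TP (g k i : ℕ) : ℕ := ∑ x ∈ Finset.range i, sP g k x

def lP (g k i : ℕ) : ℕ :=
  if i < k + 28 then 2 + TP g k i + 2 * i else 31 * g + (i - (k + 28)) * (g + 2)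

lemma TP_succ (g k i : ℕ) : TP g k (i+1) = TP g k i + sP g k i := Finset.sum_range_succ _ _

lemma TP_small (g k i : ℕ) (hi : i ≤ k) : TP g k i + 1 = 2 ^ i := by
  induction i with
  | zero => rfl
  | succ i ih =>
    have := ih (by omega)
    rw [TP_succ, sP, if_pos (by omega), pow_succ]; omega

lemma TP_big (g k m : ℕ) : TP g k (k + m) + 1 = 2 ^ k + m * g := by
  induction m with
  | zero => rw [Nat.zero_mul]; exact TP_small g k k le_rfl
  | succ m ih =>
    rw [← Nat.add_assoc, TP_succ, sP, if_neg (by omega), Nat.succ_mul]; omega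

lemma TP_mono (g k : ℕ) : Monotone (TP g k) :=
  monotone_nat_of_le_succ fun i => by rw [TP_succ]; omega

lemma chord_phase {n g k m : ℕ} (hk1 : g ≤ 2 ^ k) (hk2 : 2 ^ k ≤ 2 * g) (hgk : 2 * k + 60 ≤ g)
    (hn1 : 64 * g ≤ n) (hn2 : n ≤ 64 * g + 63) (hm : m ≤ k) (hm2 : 2 * (k + 27) ≤ 2 ^ m)
    (c : ℕ → Fin n) (C W : Finset (Sym2 (Fin n))) (h : CycPost g c C W) :
    WaiterWins (Kedges n) 1 (fun Cl _ => ∃ A ∈ PCfamily n, A ⊆ Cl) (k + 2 * m + 40) C W := by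
  obtain ⟨hinj, hpath, hclose, hfree1, hfree2⟩ := h
  set ℓ := lP g k with hℓ
  set T := TP g k with hT
  set s := sP g k with hs
  have hT0 : T 0 = 0 := rfl
  have hTs : ∀ i, T (i+1) = T i + s i := TP_succ g k
  have hTb : ∀ i, T (k + i) + 1 = 2 ^ k + i * g := TP_big g k
  have hl1 : ∀ i < k + 28, ℓ i = 2 + T i + 2 * i := fun i hi => if_pos hi
  have hl2 : ∀ i, ℓ (k + 28 + i) = 31 * g + i * (g + 2) := fun i => by
    rw [hℓ, lP, if_neg (by omega)]; congr 2; omega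
  have hs1 : ∀ i, 1 ≤ s i := by
    intro i; rw [hs, sP]; split_ifs
    · exact Nat.one_le_two_pow
    · omega
  have hsT : ∀ i < k + 38, s i ≤ T i + 1 := by
    intro i _
    rcases lt_or_ge i k with h | h
    · rw [hT, TP_small _ _ _ h.le, hs, sP, if_pos h]
    · obtain ⟨j, rfl⟩ := Nat.exists_eq_add_of_le h
      rw [hTb, hs, sP, if_neg (by omega)]; omega
  have hT28 := hTb 28
  have hlstep : ∀ i < k + 38, ℓ i + s i + 2 ≤ ℓ (i+1) := by
    intro i hi
    have := hTs i
    rcases lt_or_ge i (k + 27) with h | h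
    · rw [hl1 i (by omega), hl1 (i+1) (by omega)]; omega
    · rcases eq_or_lt_of_le h with h | h
      · subst h
        have := hl2 0
        rw [hl1 _ (by omega)]
        rw [show k + 27 + 1 = k + 28 from rfl] at *
        rw [Nat.add_zero] at this
        omega
      · obtain ⟨j, rfl⟩ := Nat.exists_eq_add_of_le (show k + 28 ≤ i by omega)
        have e : (j + 1) * (g + 2) = j * (g + 2) + (g + 2) := by ring
        rw [hl2, Nat.add_assoc (k+28), hl2, hs, sP, if_neg (by omega), e]; omega
  have hlmono : ∀ i j, i ≤ j → j ≤ k + 38 → ℓ i + 3 * (j - i) ≤ ℓ j := by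
    intro i j hij
    induction j, hij using Nat.le_induction with
    | base => intro _; omega
    | succ j hij ih =>
      intro hj
      have := ih (by omega)
      have := hlstep j (by omega)
      have := hs1 j
      omega
  have hl0 : ℓ 0 = 2 := by rw [hl1 0 (by omega), hT0]
  -- free chords
  have hchfree : ∀ i < k + 38, s(c (ℓ i), c (ℓ i + s i + 1)) ∉ C ∪ W ∧
      s(c (ℓ i + 1), c (ℓ i + s i + 1 + 1)) ∉ C ∪ W := by
    intro i hi
    have h1 := hs1 i
    have h2 := hlstep i hi
    rcases lt_or_ge i (k + 28) with h | h
    · have h3 := hlmono (i+1) (k+28) (by omega) (by omega)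
      have h4 := hl2 0
      rw [Nat.add_zero] at h4
      exact ⟨hfree1 _ _ (by omega) (by omega), hfree1 _ _ (by omega) (by omega)⟩
    · have h3 := hlmono (i+1) (k+28+10) (by omega) (by omega)
      have h4 := hl2 10
      have h5 := hlmono (k+28) i (by omega) (by omega)
      have h6 := hl2 0
      rw [Nat.add_zero] at h6
      exact ⟨hfree2 _ _ (by omega) (by omega) (by omega), hfree2 _ _ (by omega) (by omega) (by omega)⟩
  have hlK : ℓ (k + 38) = 31 * g + 10 * (g + 2) := hl2 10
  -- closings
  have hy : ℓ (k + 27) = 2 + T (k+27) + 2 * (k + 27) := hl1 _ (by omega)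
  have hy2 : ℓ m = 2 + T m + 2 * m := hl1 _ (by omega)
  have hTm : T m + 1 = 2 ^ m := TP_small g k m hm
  have hT27 := hTb 27
  have hT38 := hTb 38
  have hy2y : ℓ m ≤ ℓ (k+27) := by have := hlmono m (k+27) (by omega) (by omega); omega
  set S : Finset ℕ := Finset.Icc 2 (2 * m + 1) ∪ {ℓ m, ℓ (k+27)} with hS
  have hSm : ∀ h ∈ S, 2 ≤ h ∧ h + 1 ≤ 31 * g := by
    intro h hh
    rw [hS, Finset.mem_union, Finset.mem_Icc, Finset.mem_insert, Finset.mem_singleton] at hh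
    rcases hh with hh | rfl | rfl <;> omega
  set I : Finset (ℕ × ℕ) := S.image (fun h => (0, h)) ∪
    (Finset.range (k + 38)).image (fun i => (ℓ i, ℓ i + s i + 1)) with hI
  have hImem : ∀ p, p ∈ I ↔ (∃ h ∈ S, (0, h) = p) ∨ ∃ i < k + 38, (ℓ i, ℓ i + s i + 1) = p := by
    intro p
    rw [hI, Finset.mem_union, Finset.mem_image, Finset.mem_image]; simp only [Finset.mem_range]
  have hIc : I.card ≤ k + 2 * m + 40 := by
    have e1 : S.card ≤ 2 * m + 2 := by
      refine (Finset.card_union_le _ _).trans ?_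
      have := Finset.card_le_two (a := ℓ m) (b := ℓ (k+27))
      rw [Nat.card_Icc]; omega
    refine (Finset.card_union_le _ _).trans ?_
    have e2 := Finset.card_image_le (s := S) (f := fun h => ((0 : ℕ), h))
    have e3 := Finset.card_image_le (s := Finset.range (k+38)) (f := fun i => (ℓ i, ℓ i + s i + 1))
    rw [Finset.card_range] at e3
    omega
  refine ww_le hIc (ww_mono ?_ _ _ _ (chord_tasks c hinj I C W ?_ ?_))
  · rintro C' W' ⟨hCC, htask⟩
    have hpath' : ∀ i, i + 1 < n → s(c i, c (i+1)) ∈ C' := fun i hi => hCC (hpath i hi)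
    have hch : ∀ i < k + 38, s(c (ℓ i), c (ℓ i + s i + 1)) ∈ C' ∨
        s(c (ℓ i + 1), c (ℓ i + s i + 1 + 1)) ∈ C' := fun i hi =>
      htask (ℓ i, ℓ i + s i + 1) ((hImem _).2 (Or.inr ⟨i, hi, rfl⟩))
    have hcl : ∀ h ∈ S, s(c 0, c h) ∈ C' ∨ s(c (0 + 1), c (h + 1)) ∈ C' := fun h hh =>
      htask (0, h) ((hImem _).2 (Or.inl ⟨h, hh, rfl⟩))
    have hcyc : ∀ h ∈ S, ∀ j ≤ k + 38, ℓ j ≤ h → ∀ N ≤ T j, ∀ L, L + N = h + 1 → 3 ≤ L →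
        ∃ (u : Fin n) (p : (⊤ : SimpleGraph (Fin n)).Walk u u),
          p.IsCycle ∧ p.length = L ∧ ∀ e ∈ p.edges, e ∈ C' := by
      intro h hh j hj hjh N hN L hL hL3
      have hb := hSm h hh
      have h0j := hlmono 0 j (by omega) hj
      rcases hcl h hh with h' | h'
      · exact chord_cycle hinj hpath' s ℓ T (k+38) hT0 hTs hsT hlstep hch (by omega) hj (by omega)
          hjh (by omega) h' hN (by omega) hL3
      · exact chord_cycle hinj hpath' s ℓ T (k+38) hT0 hTs hsT hlstep hch (by omega) hj (by omega)
          (by omega) (by omega) h' hN (by omega) hL3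
    have hall : ∀ L, 3 ≤ L → L ≤ n → ∃ (u : Fin n) (p : (⊤ : SimpleGraph (Fin n)).Walk u u),
          p.IsCycle ∧ p.length = L ∧ ∀ e ∈ p.edges, e ∈ C' := by
      intro L hL3 hLn
      rcases le_or_gt L (2 * m + 2) with h1 | h1
      · exact hcyc (L - 1) (by rw [hS, Finset.mem_union, Finset.mem_Icc]; left; omega) 0 (by omega)
          (by omega) 0 (by omega) L (by omega) hL3
      · rcases le_or_gt L (ℓ m + 1) with h2 | h2
        · exact hcyc (ℓ m) (by rw [hS, Finset.mem_union]; right; simp) m (by omega) le_rfl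
            (ℓ m + 1 - L) (by omega) L (by omega) hL3
        · rcases le_or_gt L (ℓ (k + 27) + 1) with h3 | h3
          · exact hcyc (ℓ (k + 27)) (by rw [hS, Finset.mem_union]; right; simp) (k + 27) (by omega) le_rfl
              (ℓ (k + 27) + 1 - L) (by omega) L (by omega) hL3
          · have h0 := hlmono 0 (k+38) (by omega) le_rfl
            exact chord_cycle hinj hpath' s ℓ T (k+38) hT0 hTs hsT hlstep hch (a := 0) (b := n - 1)
              (j := k + 38) (N := n - L) (by omega) le_rfl (by omega) (by omega) (by omega)
              (hCC hclose) (by omega) (by omega) hL3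
    refine ⟨C' ∩ Kedges n, ⟨Finset.inter_subset_right, ?_⟩, Finset.inter_subset_left⟩
    intro L hL3 hLn
    obtain ⟨u, p, p1, p2, p3⟩ := hall L hL3 hLn
    refine ⟨u, p, p1, p2, fun e he => Finset.mem_inter.2 ⟨p3 e he, ?_⟩⟩
    have := p.edges_subset_edgeSet he
    rw [Kedges, Finset.mem_filter]
    exact ⟨Finset.mem_univ _, SimpleGraph.not_isDiag_of_mem_edgeSet _ this⟩
  · intro p hp
    rw [hImem] at hp
    rcases hp with ⟨h, hh, rfl⟩ | ⟨i, hi, rfl⟩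
    · have := hSm h hh
      exact ⟨by simp only; omega, by simp only; omega, hfree1 _ _ (by omega) (by omega), hfree1 _ _ (by omega) (by omega)⟩
    · have h1 := hs1 i
      have h2 := hlstep i hi
      have h3 := hlmono (i+1) (k+38) (by omega) le_rfl
      exact ⟨by simp only; omega, by simp only; omega, (hchfree i hi).1, (hchfree i hi).2⟩
  · intro p hp q hq
    rw [hImem] at hp hq
    rcases hp with ⟨h, hh, rfl⟩ | ⟨i, hi, rfl⟩ <;> rcases hq with ⟨h', hh', rfl⟩ | ⟨i', hi', rfl⟩
    · simp
    · have := hlmono 0 i' (by omega) (by omega)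
      simp only; omega
    · simp only; omega
    · simp only
      rcases lt_or_ge i i' with h | h
      · have := hlmono i i' (by omega) (by omega); omega
      · have := hlmono i' i (by omega) (by omega); omega

-- ===== final bounds =====
lemma sq_le_pow (q : ℕ) : (q + 1) * (q + 1) ≤ 4 * 2 ^ q := by
  rcases lt_or_ge q 2 with h | h
  · interval_cases q <;> norm_num
  · induction q, h using Nat.le_induction with
    | base => norm_num
    | succ q hq ih => rw [pow_succ]; nlinarith

lemma lin_le_pow (q : ℕ) (h : 8 ≤ q) : 2 * q + 62 ≤ 2 ^ q := by
  induction q, h using Nat.le_induction with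
  | base => norm_num
  | succ q hq ih => rw [pow_succ]; omega

lemma upper_nat {n : ℕ} (hn : 32768 ≤ n) : ∃ k q : ℕ, 2 ^ k ≤ n ∧ q * q ≤ k ∧
    WaiterWins (Kedges n) 1 (fun Cl _ => ∃ A ∈ PCfamily n, A ⊆ Cl) (n + 63 + k + 2 * q) ∅ ∅ := by
  obtain ⟨g, hg⟩ : ∃ g, g = n / 64 := ⟨_, rfl⟩
  have hg512 : 512 ≤ g := by omega
  obtain ⟨r, hr⟩ : ∃ r, r = Nat.log 2 g := ⟨_, rfl⟩
  have hr1 : 2 ^ r ≤ g := by rw [hr]; exact Nat.pow_log_le_self 2 (by omega)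
  have hr2 : g < 2 ^ (r+1) := by rw [hr]; exact Nat.lt_pow_succ_log_self (by norm_num) g
  have hr9 : 9 ≤ r := by
    by_contra hlt
    have : 2 ^ (r+1) ≤ 2 ^ 9 := Nat.pow_le_pow_right (by norm_num) (by omega)
    norm_num at this; omega
  have hlin := lin_le_pow r (by omega)
  have hpow : 2 ^ (r+1) = 2 * 2 ^ r := by rw [pow_succ]; ring
  obtain ⟨q, hq⟩ : ∃ q, q = Nat.sqrt (r+1) := ⟨_, rfl⟩
  have hq1 : q * q ≤ r + 1 := by rw [hq]; exact Nat.sqrt_le (r+1)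
  have hq2 : r + 1 < (q + 1) * (q + 1) := by rw [hq]; exact Nat.lt_succ_sqrt (r+1)
  have hq3 := sq_le_pow q
  have hq4 : 1 ≤ 2 ^ q := Nat.one_le_two_pow
  have hpow6 : 2 ^ (q+6) = 64 * 2 ^ q := by rw [pow_add]; ring
  have hm : q + 6 ≤ r + 1 := by
    rcases lt_or_ge q 3 with h | h
    · omega
    · nlinarith
  refine ⟨r + 1, q, by omega, hq1, ?_⟩
  have := ww_comp (fun C W (h : HamPost (n := n) g C W) => by
    obtain ⟨c, hc⟩ := cyc_of_ham h
    exact chord_phase (k := r + 1) (m := q + 6) (by omega) (by omega) (by omega) (by omega) (by omega)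
      hm (by omega) c C W hc) _ _ _ (ham_lemma (n := n) (g := g) (by omega) (by omega))
  exact ww_le (by omega) this

theorem WC_pancyclicity_unbiased :
    ∀ ε : ℝ, 0 < ε → ∃ n₀ : ℕ, ∀ n : ℕ, n₀ ≤ n →
      (n : ℝ) + (1 - ε) * Real.logb 2 n ≤ (tauWC (Kedges n) (PCfamily n) 1 : ℝ) ∧
      (tauWC (Kedges n) (PCfamily n) 1 : ℝ) ≤ (n : ℝ) + (1 + ε) * Real.logb 2 n := by
  intro ε hε
  have htend : Filter.Tendsto (fun n : ℕ => Real.logb 2 (n : ℝ)) Filter.atTop Filter.atTop :=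
    (Real.tendsto_logb_atTop (by norm_num)).comp tendsto_natCast_atTop_atTop
  obtain ⟨n₁, hn₁⟩ := Filter.eventually_atTop.1
    (htend.eventually_ge_atTop ((2 / ε) * (63 + 2 / ε)))
  refine ⟨max n₁ 32768, fun n hn => ?_⟩
  have hn' : 32768 ≤ n := le_trans (le_max_right _ _) hn
  have hL := hn₁ n (le_trans (le_max_left _ _) hn)
  set L := Real.logb 2 (n : ℝ) with hLdef
  have hL' : 63 + 2 / ε ≤ ε / 2 * L := by
    have := mul_le_mul_of_nonneg_left hL (by positivity : (0:ℝ) ≤ ε / 2)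
    have e : ε / 2 * ((2 / ε) * (63 + 2 / ε)) = 63 + 2 / ε := by field_simp
    rwa [e] at this
  have hdiv : 0 < 2 / ε := by positivity
  obtain ⟨k, q, hk, hq, hwin⟩ := upper_nat hn'
  have hnpos : (0 : ℝ) < n := by
    have : 0 < n := by omega
    exact_mod_cast this
  constructor
  · have hmem : WaiterWins (Kedges n) 1 (fun Cl _ => ∃ A ∈ PCfamily n, A ⊆ Cl)
        (tauWC (Kedges n) (PCfamily n) 1) ∅ ∅ :=
      Nat.sInf_mem (s := {t | WaiterWins (Kedges n) 1 (fun Cl _ => ∃ A ∈ PCfamily n, A ⊆ Cl) t ∅ ∅})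
        ⟨_, hwin⟩
    generalize tauWC (Kedges n) (PCfamily n) 1 = t at hmem
    obtain ⟨C', W', h1, h2⟩ := ww_card _ _ _ hmem
    obtain ⟨h3, h4⟩ := pc_card (by omega) C' h1
    rw [Finset.card_empty, Nat.zero_add] at h2
    obtain ⟨d, hd⟩ : ∃ d, C'.card + 1 = n + d := ⟨C'.card + 1 - n, by omega⟩
    rw [hd, Nat.add_sub_cancel_left] at h4
    have h5 : n ≤ 2 ^ (d + 1) := by rw [pow_succ]; omega
    have h6 : L ≤ d + 1 := by
      rw [hLdef, Real.logb_le_iff_le_rpow (by norm_num) hnpos]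
      have : (n : ℝ) ≤ 2 ^ (d + 1) := by exact_mod_cast h5
      calc (n : ℝ) ≤ 2 ^ (d + 1) := this
        _ = (2 : ℝ) ^ ((d : ℝ) + 1) := by
          rw [← Real.rpow_natCast]; push_cast; rfl
    have h7 : (n : ℝ) + d ≤ t + 1 := by
      have : n + d ≤ t + 1 := by omega
      exact_mod_cast this
    nlinarith
  · have hle : tauWC (Kedges n) (PCfamily n) 1 ≤ n + 63 + k + 2 * q := Nat.sInf_le hwin
    have hle' : (tauWC (Kedges n) (PCfamily n) 1 : ℝ) ≤ n + 63 + k + 2 * q := by exact_mod_cast hle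
    have hkL : (k : ℝ) ≤ L := by
      rw [hLdef, Real.le_logb_iff_rpow_le (by norm_num) hnpos, Real.rpow_natCast]
      exact_mod_cast hk
    have hq' : (q : ℝ) * q ≤ L := le_trans (by exact_mod_cast hq) hkL
    have ham : 2 * (q : ℝ) ≤ ε / 2 * (q * q) + 2 / ε := by
      have e : ε / 2 * ((q : ℝ) * q) + 2 / ε - 2 * q = ε / 2 * ((q : ℝ) - 2 / ε) ^ 2 := by
        field_simp; ring
      have : 0 ≤ ε / 2 * ((q : ℝ) - 2 / ε) ^ 2 := by positivity
      linarith
    have := mul_le_mul_of_nonneg_left hq' (by positivity : (0:ℝ) ≤ ε / 2)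
    linarith
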